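/- arXiv:1503.05863 — 2 statements merged into one kernel-verified Lean document; each statement's English description precedes it below -/
import Mathlib

section
/- Let d ≥ 1. For every real m ≥ 0 there exist a natural number m′, a natural number M ≥ 2, and for every δ > 0 and B > 0 a constant C > 0 with the following property. Let Φ : ℝ^d × ℝ^d → ℝ be a smooth real-valued function such that |∂_x^α ∂_η^β Φ(x,η)| ≤ B for all multi-indices with 2 ≤ |α|+|β| ≤ M and all (x,η), and |det ∂²_{x,η} Φ(x,η)| ≥ δ for all (x,η). Let χ : ℝ^{2d} → ℝ^{2d} be a map such that χ(∇_η Φ(x,η), η) = (x, ∇_x Φ(x,η)) for all (x,η) ∈ ℝ^{2d}. Let a : ℝ^d × ℝ^d → ℂ be smooth with all derivatives bounded, and define for f ∈ 𝒮(ℝ^d): T f(x) = (2π)^{−d} ∫_{ℝ^d} e^{iΦ(x,η)} a(x,η) ℱf(η) dη. Then |⟨T(π(z)g), π(w)g⟩| ≤ C·‖a‖_{m′}·(1+|w−χ(z)|²)^{−m/2} for all z, w ∈ ℝ^{2d}, where ‖a‖_{m′} = max over |α|+|β| ≤ m′ of the sup norm of ∂_x^α ∂_η^β a. -/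
open MeasureTheory Complex Real
open scoped ENNReal RealInnerProductSpace

noncomputable section

abbrev E (d : ℕ) : Type := EuclideanSpace ℝ (Fin d)

/-- Phase space `ℝ^{2d} = ℝ^d × ℝ^d`. -/
abbrev P (d : ℕ) : Type := E d × E d

/-- Square of the Euclidean norm on the phase space `ℝ^{2d}`. -/
def ensq {d : ℕ} (z : P d) : ℝ := ‖z.1‖ ^ 2 + ‖z.2‖ ^ 2

/-- The wave packet `π(z)g(y) = exp(i y·ξ)·g(y-x)`, Gaussian window `g(y)=exp(-|y|²/2)`. -/
def pk (d : ℕ) (z : P d) (y : E d) : ℂ :=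
  Complex.exp (Complex.I * (⟪y, z.2⟫ : ℂ)) * Real.exp (-‖y - z.1‖ ^ 2 / 2)

/-- The complex conjugate of the wave packet `π(z)g`. -/
def pkbar (d : ℕ) (z : P d) (y : E d) : ℂ :=
  Complex.exp (-Complex.I * (⟪y, z.2⟫ : ℂ)) * Real.exp (-‖y - z.1‖ ^ 2 / 2)

/-- The Fourier transform `ℱu(ξ) = ∫ exp(-i x·ξ) u(x) dx`. -/
def FT (d : ℕ) (u : E d → ℂ) (ξ : E d) : ℂ :=
  ∫ x, Complex.exp (-Complex.I * (⟪x, ξ⟫ : ℂ)) * u x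

/-- The mixed Hessian matrix `∂²_{x,η}Φ(x,η) = (∂²Φ/∂x_j∂η_k)_{j,k}`. -/
def mixedHess (d : ℕ) (Φ : P d → ℝ) (x η : E d) : Matrix (Fin d) (Fin d) ℝ :=
  Matrix.of fun j k =>
    fderiv ℝ (fun x' : E d =>
        fderiv ℝ (fun η' : E d => Φ (x', η')) η (EuclideanSpace.single k (1 : ℝ))) x
      (EuclideanSpace.single j (1 : ℝ))

/-!
A wave-packet coefficient of the operator is, up to a factor of modulus `(2π)^(-d/2)`, an absolutely
convergent integral over phase space `∫ exp φ · a`, where the real part of `φ` is `-|p - p₀|² / 2`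
with `p₀ = (x, η)`, `z = (y, η)`, `w = (x, ξ)`, the derivatives of `φ` of order at least two are
bounded uniformly in `z` and `w`, and the gradient of `φ` at `p₀` is
`i (∇_x Φ(p₀) - ξ, ∇_η Φ(p₀) - y)`.
Integrating by parts `N` times in the direction that realises the norm of this gradient gains
its `N`-th power; the variation of the gradient away from `p₀` costs only polynomial factors, which
the Gaussian absorbs.

The gradient in turn controls the distance from `w` to `χ z`. The determinant bound makes the
inverses of the mixed Hessians uniformly bounded, so that short Newton steps for the equation
`∇_η Φ(x, η) = y` decrease the residual proportionally to their length. Minimising the residual plus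
a small multiple of the distance to `x` therefore gives a solution `x₀` at distance
`O(|∇_η Φ(x, η) - y|)` from `x`, and `χ z = (x₀, ∇_x Φ(x₀, η))`.
-/

section PolynomialGrowth

variable {V F : Type*} [NormedAddCommGroup V] [NormedSpace ℝ V]
  [NormedAddCommGroup F] [NormedSpace ℝ F]

theorem norm_fderiv_sub_fderiv_le {f : V → F} {B : ℝ} (hf : ContDiff ℝ 2 f)
    (hB : ∀ p, ‖iteratedFDeriv ℝ 2 f p‖ ≤ B) (p q : V) :
    ‖fderiv ℝ f p - fderiv ℝ f q‖ ≤ B * ‖p - q‖ := by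
  have hdiff : Differentiable ℝ (fderiv ℝ f) :=
    (hf.fderiv_right (m := 1) (by norm_num)).differentiable (by simp)
  refine convex_univ.norm_image_sub_le_of_norm_fderiv_le (𝕜 := ℝ) (fun x _ => hdiff x)
    (fun x _ => ?_) (Set.mem_univ q) (Set.mem_univ p)
  rw [← norm_iteratedFDeriv_one, norm_iteratedFDeriv_fderiv]
  exact hB x

theorem norm_iteratedFDeriv_le_of_fderiv_eq_add_const {f : V → F} {T : V →L[ℝ] V →L[ℝ] F}
    {ℓ : V →L[ℝ] F} (hf : ∀ p, fderiv ℝ f p = T p + ℓ) {i : ℕ} (hi : 2 ≤ i) (p : V) :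
    ‖iteratedFDeriv ℝ i f p‖ ≤ ‖T‖ := by
  obtain ⟨i, rfl⟩ := Nat.exists_eq_add_of_le' hi
  have hsnd : fderiv ℝ (fderiv ℝ f) = fun _ => T := by
    funext q
    rw [funext hf]
    simp
  rw [← norm_iteratedFDeriv_fderiv, ← norm_iteratedFDeriv_fderiv, hsnd]
  cases i with
  | zero => simp
  | succ i =>
    rw [iteratedFDeriv_succ_const, Pi.zero_apply, norm_zero]
    exact norm_nonneg T

/-- `f` is of class `C^n` and its derivatives of order at most `n` are bounded by
`C (1 + ‖p - p₀‖) ^ k`. The centre `p₀` is kept explicit so that the constant `C` can be uniform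
in it. -/
structure HasPolyGrowth (p₀ : V) (n k : ℕ) (C : ℝ) (f : V → F) : Prop where
  contDiff : ContDiff ℝ n f
  norm_iteratedFDeriv_le : ∀ i ≤ n, ∀ p, ‖iteratedFDeriv ℝ i f p‖ ≤ C * (1 + ‖p - p₀‖) ^ k

namespace HasPolyGrowth

variable {p₀ : V} {n n' k k' : ℕ} {C C' D : ℝ} {f g : V → F} {u v : V → ℂ}

theorem of_bounded (hf : ContDiff ℝ n f) (hC : ∀ i ≤ n, ∀ p, ‖iteratedFDeriv ℝ i f p‖ ≤ C) :
    HasPolyGrowth p₀ n 0 C f :=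
  ⟨hf, fun i hi p => by simpa using hC i hi p⟩

theorem norm_le (hf : HasPolyGrowth p₀ n k C f) (p : V) : ‖f p‖ ≤ C * (1 + ‖p - p₀‖) ^ k := by
  simpa using hf.norm_iteratedFDeriv_le 0 n.zero_le p

theorem nonneg (hf : HasPolyGrowth p₀ n k C f) : 0 ≤ C := by
  simpa using (norm_nonneg _).trans (hf.norm_le p₀)

theorem mono (hf : HasPolyGrowth p₀ n k C f) (hn : n' ≤ n) (hk : k ≤ k') (hC : C ≤ C') :
    HasPolyGrowth p₀ n' k' C' f := by
  refine ⟨hf.contDiff.of_le (by exact_mod_cast hn), fun i hi p =>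
    (hf.norm_iteratedFDeriv_le i (hi.trans hn) p).trans ?_⟩
  have hC' : 0 ≤ C' := hf.nonneg.trans hC
  have hp : 1 ≤ 1 + ‖p - p₀‖ := by simp
  gcongr

theorem add (hf : HasPolyGrowth p₀ n k C f) (hg : HasPolyGrowth p₀ n k D g) :
    HasPolyGrowth p₀ n k (C + D) (fun p => f p + g p) := by
  refine ⟨hf.contDiff.add hg.contDiff, fun i hi p => ?_⟩
  have hi' : (i : WithTop ℕ∞) ≤ n := by exact_mod_cast hi
  rw [fun_iteratedFDeriv_add_apply (hf.contDiff.of_le hi').contDiffAt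
    (hg.contDiff.of_le hi').contDiffAt, add_mul]
  exact (norm_add_le _ _).trans
    (add_le_add (hf.norm_iteratedFDeriv_le i hi p) (hg.norm_iteratedFDeriv_le i hi p))

theorem mul (hu : HasPolyGrowth p₀ n k C u) (hv : HasPolyGrowth p₀ n k' D v) :
    HasPolyGrowth p₀ n (k + k') (2 ^ n * (C * D)) (fun p => u p * v p) := by
  refine ⟨hu.contDiff.mul hv.contDiff, fun i hi p => ?_⟩
  have hC := hu.nonneg
  have hD := hv.nonneg
  calc ‖iteratedFDeriv ℝ i (fun p => u p * v p) p‖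
      ≤ ∑ j ∈ Finset.range (i + 1), (i.choose j : ℝ) * ‖iteratedFDeriv ℝ j u p‖ *
          ‖iteratedFDeriv ℝ (i - j) v p‖ :=
        norm_iteratedFDeriv_mul_le hu.contDiff hv.contDiff p (by exact_mod_cast hi)
    _ ≤ ∑ j ∈ Finset.range (i + 1), (i.choose j : ℝ) * (C * (1 + ‖p - p₀‖) ^ k) *
          (D * (1 + ‖p - p₀‖) ^ k') := by
        gcongr with j hj
        · exact hu.norm_iteratedFDeriv_le j (by grind) p
        · exact hv.norm_iteratedFDeriv_le (i - j) (by lia) p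
    _ = 2 ^ i * (C * D) * (1 + ‖p - p₀‖) ^ (k + k') := by
        rw [← Finset.sum_mul, ← Finset.sum_mul, ← Nat.cast_sum, Nat.sum_range_choose]
        push_cast
        ring
    _ ≤ 2 ^ n * (C * D) * (1 + ‖p - p₀‖) ^ (k + k') := by
        gcongr
        norm_num

theorem clm_apply_const {A : V → V →L[ℝ] F} (hA : HasPolyGrowth p₀ n k C A) {e : V}
    (he : ‖e‖ ≤ 1) : HasPolyGrowth p₀ n k C (fun p => A p e) := by
  refine ⟨hA.contDiff.clm_apply contDiff_const, fun i hi p => ?_⟩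
  calc ‖iteratedFDeriv ℝ i (fun p => A p e) p‖
      ≤ ‖e‖ * ‖iteratedFDeriv ℝ i A p‖ :=
        norm_iteratedFDeriv_clm_apply_const hA.contDiff.contDiffAt (by exact_mod_cast hi)
    _ ≤ ‖iteratedFDeriv ℝ i A p‖ := mul_le_of_le_one_left (norm_nonneg _) he
    _ ≤ C * (1 + ‖p - p₀‖) ^ k := hA.norm_iteratedFDeriv_le i hi p

theorem fderiv_right (hf : HasPolyGrowth p₀ (n + 1) k C f) :
    HasPolyGrowth p₀ n k C (fderiv ℝ f) :=
  ⟨hf.contDiff.fderiv_right (by norm_cast), fun i hi p => by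
    simpa only [norm_iteratedFDeriv_fderiv] using hf.norm_iteratedFDeriv_le (i + 1) (by lia) p⟩

theorem fderiv_sub_fderiv_center (hf : ContDiff ℝ (n + 2) f)
    (hC : ∀ i, 2 ≤ i → i ≤ n + 2 → ∀ p, ‖iteratedFDeriv ℝ i f p‖ ≤ C) :
    HasPolyGrowth p₀ n 1 C (fun p => fderiv ℝ f p - fderiv ℝ f p₀) := by
  have hC0 : 0 ≤ C := (norm_nonneg _).trans (hC 2 le_rfl (by lia) p₀)
  have hf' : ContDiff ℝ n (fderiv ℝ f) := hf.fderiv_right (by gcongr; norm_num)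
  refine ⟨hf'.sub contDiff_const, ?_⟩
  rintro (_ | i) hi p
  · rw [norm_iteratedFDeriv_zero, pow_one]
    refine (norm_fderiv_sub_fderiv_le (hf.of_le (by simp)) (hC 2 le_rfl (by lia)) p p₀).trans ?_
    gcongr
    simp
  · have hsub : fderiv ℝ (fun p => fderiv ℝ f p - fderiv ℝ f p₀) = fderiv ℝ (fderiv ℝ f) := by
      funext q
      rw [fderiv_sub_const]
    rw [← norm_iteratedFDeriv_fderiv, hsub, norm_iteratedFDeriv_fderiv, norm_iteratedFDeriv_fderiv]
    exact (hC (i + 2) (by lia) (by lia) p).trans (le_mul_of_one_le_right hC0 (by simp))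

end HasPolyGrowth

end PolynomialGrowth

section DampedOscillatoryIntegrals

variable {V : Type*} [NormedAddCommGroup V] [NormedSpace ℝ V]

/-- A complex phase `φ` of class `C^(N+2)` with derivatives of orders `2, …, N + 2` bounded by `B`,
whose exponential is damped like a Gaussian around `p₀`. The first derivative is not bounded: it is
the large parameter of the integral `∫ exp φ b`. -/
structure IsDampedPhase (N : ℕ) (B c : ℝ) (p₀ : V) (φ : V → ℂ) : Prop where
  contDiff : ContDiff ℝ (N + 2) φ
  norm_iteratedFDeriv_le : ∀ i, 2 ≤ i → i ≤ N + 2 → ∀ p, ‖iteratedFDeriv ℝ i φ p‖ ≤ B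
  re_le : ∀ p, (φ p).re ≤ -c * ‖p - p₀‖ ^ 2

namespace IsDampedPhase

variable {N : ℕ} {B c : ℝ} {p₀ : V} {φ : V → ℂ}

theorem mono {N' : ℕ} (hφ : IsDampedPhase N B c p₀ φ) (hN : N' ≤ N) :
    IsDampedPhase N' B c p₀ φ :=
  ⟨hφ.contDiff.of_le (by norm_cast; lia),
    fun i hi hi' => hφ.norm_iteratedFDeriv_le i hi (by lia), hφ.re_le⟩

theorem differentiable (hφ : IsDampedPhase N B c p₀ φ) : Differentiable ℝ φ :=
  hφ.contDiff.differentiable (by norm_cast)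

theorem differentiable_cexp (hφ : IsDampedPhase N B c p₀ φ) :
    Differentiable ℝ (fun p => Complex.exp (φ p)) :=
  hφ.differentiable.cexp

theorem norm_cexp_mul_le (hφ : IsDampedPhase N B c p₀ φ) {n k : ℕ} {C : ℝ} {b : V → ℂ}
    (hb : HasPolyGrowth p₀ n k C b) (p : V) :
    ‖Complex.exp (φ p) * b p‖ ≤
      C * ((1 + ‖p - p₀‖) ^ k * Real.exp (-c * ‖p - p₀‖ ^ 2)) := by
  rw [norm_mul, Complex.norm_exp, mul_comm]
  calc ‖b p‖ * Real.exp (φ p).re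
      ≤ C * (1 + ‖p - p₀‖) ^ k * Real.exp (-c * ‖p - p₀‖ ^ 2) := by
        gcongr
        · exact (norm_nonneg _).trans (hb.norm_le p)
        · exact hb.norm_le p
        · exact hφ.re_le p
    _ = C * ((1 + ‖p - p₀‖) ^ k * Real.exp (-c * ‖p - p₀‖ ^ 2)) := mul_assoc ..

/-- The first-order operator `b ↦ (dφ(p) e - dφ(p₀) e) b + ∂_e b` transferred to the amplitude when
`∫ exp φ b` is integrated by parts in direction `e`. -/
def transport (φ : V → ℂ) (p₀ e : V) (b : V → ℂ) (p : V) : ℂ :=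
  (fderiv ℝ φ p e - fderiv ℝ φ p₀ e) * b p + fderiv ℝ b p e

theorem hasPolyGrowth_transport {n k : ℕ} {C : ℝ} (hφ : IsDampedPhase n B c p₀ φ) {b : V → ℂ}
    (hb : HasPolyGrowth p₀ (n + 1) k C b) {e : V} (he : ‖e‖ ≤ 1) :
    HasPolyGrowth p₀ n (k + 1) ((2 ^ n * B + 1) * C) (transport φ p₀ e b) := by
  have hmul : HasPolyGrowth p₀ n (1 + k) (2 ^ n * (B * C))
      (fun p => (fderiv ℝ φ p e - fderiv ℝ φ p₀ e) * b p) :=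
    ((HasPolyGrowth.fderiv_sub_fderiv_center hφ.contDiff
      hφ.norm_iteratedFDeriv_le).clm_apply_const he).mul (hb.mono (by lia) le_rfl le_rfl)
  have hderiv : HasPolyGrowth p₀ n (1 + k) C (fun p => fderiv ℝ b p e) :=
    (hb.fderiv_right.clm_apply_const he).mono le_rfl (by lia) le_rfl
  rw [add_comm k 1, show (2 ^ n * B + 1) * C = 2 ^ n * (B * C) + C by ring]
  exact hmul.add hderiv

end IsDampedPhase

theorem exists_norm_apply_eq_opNorm [FiniteDimensional ℝ V] {F : Type*} [NormedAddCommGroup F]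
    [NormedSpace ℝ F] (T : V →L[ℝ] F) : ∃ e, ‖e‖ ≤ 1 ∧ ‖T e‖ = ‖T‖ := by
  have := FiniteDimensional.proper_real V
  obtain ⟨e, he, hsup⟩ := (isCompact_closedBall (0 : V) 1).exists_sSup_image_eq
    (Metric.nonempty_closedBall.2 zero_le_one) T.continuous.norm.continuousOn
  exact ⟨e, by simpa using he, by rw [← hsup, T.sSup_unitClosedBall_eq_norm]⟩

variable [FiniteDimensional ℝ V] [MeasurableSpace V] [BorelSpace V] {μ : Measure V}
  [μ.IsAddHaarMeasure] {N : ℕ} {B c : ℝ} {p₀ : V} {φ : V → ℂ}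

/-- The moment of order `k` of a Gaussian, `∫ (1 + ‖p‖) ^ k exp(-c ‖p‖²) dμ`. -/
def gaussianMoment (μ : Measure V) (c : ℝ) (k : ℕ) : ℝ :=
  ∫ p, (1 + ‖p‖) ^ k * Real.exp (-c * ‖p‖ ^ 2) ∂μ

theorem one_add_pow_mul_exp_neg_mul_sq_le (hc : 0 < c) (k : ℕ) {t : ℝ} (ht : 0 ≤ t) :
    (1 + t) ^ k * Real.exp (-c * t ^ 2) ≤ k.factorial * Real.exp (1 + 1 / (4 * c)) := by
  have hpow : (1 + t) ^ k ≤ k.factorial * Real.exp (1 + t) := by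
    have := Real.pow_div_factorial_le_exp (1 + t) (by positivity) k
    rwa [div_le_iff₀' (by positivity)] at this
  have hsq : 1 + t + -c * t ^ 2 ≤ 1 + 1 / (4 * c) := by
    have : 0 ≤ c * (t - 1 / (2 * c)) ^ 2 := by positivity
    field_simp at this ⊢
    linarith
  calc (1 + t) ^ k * Real.exp (-c * t ^ 2)
      ≤ k.factorial * Real.exp (1 + t) * Real.exp (-c * t ^ 2) := by gcongr
    _ = k.factorial * Real.exp (1 + t + -c * t ^ 2) := by rw [mul_assoc, ← Real.exp_add]
    _ ≤ k.factorial * Real.exp (1 + 1 / (4 * c)) := by gcongr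

theorem integrable_one_add_norm_pow_mul_exp_neg_mul_sq (hc : 0 < c) (k : ℕ) :
    Integrable (fun p : V => (1 + ‖p‖) ^ k * Real.exp (-c * ‖p‖ ^ 2)) μ := by
  set r := Module.finrank ℝ V + 1
  set D := (k + r).factorial * Real.exp (1 + 1 / (4 * c))
  have hint : Integrable (fun p : V => D * (1 + ‖p‖) ^ (-(r : ℝ))) μ :=
    (integrable_one_add_norm (by simp [r])).const_mul D
  refine hint.mono' (by fun_prop) (Filter.Eventually.of_forall fun p => ?_)
  rw [Real.norm_of_nonneg (by positivity), Real.rpow_neg (by positivity), Real.rpow_natCast,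
    ← div_eq_mul_inv, le_div_iff₀ (by positivity)]
  calc (1 + ‖p‖) ^ k * Real.exp (-c * ‖p‖ ^ 2) * (1 + ‖p‖) ^ r
      = (1 + ‖p‖) ^ (k + r) * Real.exp (-c * ‖p‖ ^ 2) := by ring
    _ ≤ D := one_add_pow_mul_exp_neg_mul_sq_le hc (k + r) (norm_nonneg p)

namespace IsDampedPhase

variable {n k : ℕ} {C : ℝ} {b : V → ℂ}

theorem integrable_cexp_mul (hφ : IsDampedPhase N B c p₀ φ) (hc : 0 < c)
    (hb : HasPolyGrowth p₀ n k C b) : Integrable (fun p => Complex.exp (φ p) * b p) μ :=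
  (((integrable_one_add_norm_pow_mul_exp_neg_mul_sq hc k).comp_sub_right p₀).const_mul C).mono'
    (hφ.differentiable_cexp.continuous.mul hb.contDiff.continuous).aestronglyMeasurable
    (Filter.Eventually.of_forall (hφ.norm_cexp_mul_le hb))

theorem norm_integral_cexp_mul_le (hφ : IsDampedPhase N B c p₀ φ) (hc : 0 < c)
    (hb : HasPolyGrowth p₀ n k C b) :
    ‖∫ p, Complex.exp (φ p) * b p ∂μ‖ ≤ C * gaussianMoment μ c k := by
  refine (norm_integral_le_of_norm_le
    (((integrable_one_add_norm_pow_mul_exp_neg_mul_sq hc k).comp_sub_right p₀).const_mul C)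
    (Filter.Eventually.of_forall (hφ.norm_cexp_mul_le hb))).trans_eq ?_
  rw [integral_const_mul, gaussianMoment,
    integral_sub_right_eq_self (fun p : V => (1 + ‖p‖) ^ k * Real.exp (-c * ‖p‖ ^ 2)) p₀]

theorem fderiv_mul_integral_cexp_mul (hφ : IsDampedPhase n B c p₀ φ) (hc : 0 < c)
    (hb : HasPolyGrowth p₀ (n + 1) k C b) {e : V} (he : ‖e‖ ≤ 1) :
    fderiv ℝ φ p₀ e * ∫ p, Complex.exp (φ p) * b p ∂μ =
      -∫ p, Complex.exp (φ p) * transport φ p₀ e b p ∂μ := by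
  have hint : Integrable (fun p => Complex.exp (φ p) * b p) μ := hφ.integrable_cexp_mul hc hb
  have hint_deriv : Integrable (fun p => Complex.exp (φ p) * fderiv ℝ b p e) μ :=
    hφ.integrable_cexp_mul hc (hb.fderiv_right.clm_apply_const he)
  have hint_transport : Integrable (fun p => Complex.exp (φ p) * transport φ p₀ e b p) μ :=
    hφ.integrable_cexp_mul hc (hφ.hasPolyGrowth_transport hb he)
  have hint_sub : Integrable (fun p => Complex.exp (φ p) * transport φ p₀ e b p -
      Complex.exp (φ p) * fderiv ℝ b p e) μ := hint_transport.sub hint_deriv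
  have hderiv_mul : (fun p => fderiv ℝ (fun p => Complex.exp (φ p)) p e * b p) =
      fun p => fderiv ℝ φ p₀ e * (Complex.exp (φ p) * b p) +
        (Complex.exp (φ p) * transport φ p₀ e b p - Complex.exp (φ p) * fderiv ℝ b p e) := by
    funext p
    rw [(hφ.differentiable p).hasFDerivAt.cexp.fderiv, transport]
    simp only [smul_apply, smul_eq_mul]
    ring
  have hparts : ∫ p, Complex.exp (φ p) * fderiv ℝ b p e ∂μ =
      -∫ p, fderiv ℝ (fun p => Complex.exp (φ p)) p e * b p ∂μ := by
    refine integral_mul_fderiv_eq_neg_fderiv_mul_of_integrable ?_ hint_deriv hint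
      (fun p _ => hφ.differentiable_cexp p)
      (fun p _ => hb.contDiff.differentiable (by simp) p)
    rw [hderiv_mul]
    exact (hint.const_mul _).add hint_sub
  rw [hderiv_mul, integral_add (hint.const_mul _) hint_sub,
    integral_const_mul, integral_sub hint_transport hint_deriv] at hparts
  linear_combination hparts

theorem norm_fderiv_apply_pow_mul_norm_integral_le (hφ : IsDampedPhase N B c p₀ φ) (hc : 0 < c)
    {e : V} (he : ‖e‖ ≤ 1) (hn : n ≤ N) (hb : HasPolyGrowth p₀ n k C b) :
    ‖fderiv ℝ φ p₀ e‖ ^ n * ‖∫ p, Complex.exp (φ p) * b p ∂μ‖ ≤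
      (2 ^ N * B + 1) ^ n * C * gaussianMoment μ c (k + n) := by
  induction n generalizing k C b with
  | zero => simpa using hφ.norm_integral_cexp_mul_le hc hb
  | succ n ih =>
    have hB : 0 ≤ B := (norm_nonneg _).trans (hφ.norm_iteratedFDeriv_le 2 le_rfl (by lia) p₀)
    have hφn : IsDampedPhase n B c p₀ φ := hφ.mono (by lia)
    have htransport : HasPolyGrowth p₀ n (k + 1) ((2 ^ N * B + 1) * C) (transport φ p₀ e b) :=
      (hφn.hasPolyGrowth_transport hb he).mono le_rfl le_rfl (by
        have := hb.nonneg
        gcongr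
        · norm_num
        · lia)
    calc ‖fderiv ℝ φ p₀ e‖ ^ (n + 1) * ‖∫ p, Complex.exp (φ p) * b p ∂μ‖
        = ‖fderiv ℝ φ p₀ e‖ ^ n * ‖fderiv ℝ φ p₀ e * ∫ p, Complex.exp (φ p) * b p ∂μ‖ := by
          rw [norm_mul]
          ring
      _ = ‖fderiv ℝ φ p₀ e‖ ^ n * ‖∫ p, Complex.exp (φ p) * transport φ p₀ e b p ∂μ‖ := by
          rw [hφn.fderiv_mul_integral_cexp_mul hc hb he, norm_neg]
      _ ≤ (2 ^ N * B + 1) ^ n * ((2 ^ N * B + 1) * C) * gaussianMoment μ c (k + 1 + n) :=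
          ih (by lia) htransport
      _ = (2 ^ N * B + 1) ^ (n + 1) * C * gaussianMoment μ c (k + (n + 1)) := by
          rw [add_assoc k 1 n, add_comm 1 n]
          ring

end IsDampedPhase

theorem exists_one_add_norm_fderiv_pow_mul_norm_integral_le (μ : Measure V) [μ.IsAddHaarMeasure]
    (N : ℕ) (B : ℝ) (hc : 0 < c) :
    ∃ K : ℝ, ∀ (p₀ : V) (φ : V → ℂ), IsDampedPhase N B c p₀ φ →
      ∀ (R : ℝ) (b : V → ℂ), HasPolyGrowth p₀ N 0 R b →
        (1 + ‖fderiv ℝ φ p₀‖) ^ N * ‖∫ p, Complex.exp (φ p) * b p ∂μ‖ ≤ K * R := by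
  refine ⟨2 ^ (N - 1) *
    (gaussianMoment μ c 0 + (2 ^ N * B + 1) ^ N * gaussianMoment μ c N), ?_⟩
  intro p₀ φ hφ R b hb
  obtain ⟨e, he, hnorm⟩ := exists_norm_apply_eq_opNorm (fderiv ℝ φ p₀)
  have hbdd : ‖∫ p, Complex.exp (φ p) * b p ∂μ‖ ≤ R * gaussianMoment μ c 0 :=
    hφ.norm_integral_cexp_mul_le hc hb
  have hdecay : ‖fderiv ℝ φ p₀‖ ^ N * ‖∫ p, Complex.exp (φ p) * b p ∂μ‖ ≤
      (2 ^ N * B + 1) ^ N * R * gaussianMoment μ c N := by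
    simpa only [hnorm, zero_add] using
      hφ.norm_fderiv_apply_pow_mul_norm_integral_le (μ := μ) hc he le_rfl hb
  calc (1 + ‖fderiv ℝ φ p₀‖) ^ N * ‖∫ p, Complex.exp (φ p) * b p ∂μ‖
      ≤ 2 ^ (N - 1) * (1 ^ N + ‖fderiv ℝ φ p₀‖ ^ N) * ‖∫ p, Complex.exp (φ p) * b p ∂μ‖ := by
        gcongr
        exact add_pow_le zero_le_one (norm_nonneg _) N
    _ = 2 ^ (N - 1) * (‖∫ p, Complex.exp (φ p) * b p ∂μ‖ +
          ‖fderiv ℝ φ p₀‖ ^ N * ‖∫ p, Complex.exp (φ p) * b p ∂μ‖) := by ring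
    _ ≤ 2 ^ (N - 1) * (R * gaussianMoment μ c 0 +
          (2 ^ N * B + 1) ^ N * R * gaussianMoment μ c N) := by gcongr
    _ = _ := by ring

end DampedOscillatoryIntegrals

section ErrorBounds

theorem exists_eq_zero_of_descent {X : Type*} [PseudoMetricSpace X] [ProperSpace X] {f : X → ℝ}
    (hf : Continuous f) (hf0 : ∀ x, 0 ≤ f x) {c : ℝ} (hc : 0 < c)
    (hdesc : ∀ x, f x ≠ 0 → ∃ x', f x' + c * dist x' x < f x) (x : X) :
    ∃ x₀, f x₀ = 0 ∧ c * dist x₀ x ≤ f x := by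
  have hcoercive : Filter.Tendsto (fun x' => f x' + c * dist x' x) (Filter.cocompact X)
      Filter.atTop :=
    Filter.tendsto_atTop_mono (fun x' => le_add_of_nonneg_left (hf0 x'))
      ((tendsto_dist_right_cocompact_atTop x).const_mul_atTop hc)
  have : Nonempty X := ⟨x⟩
  obtain ⟨x₀, hmin⟩ := Continuous.exists_forall_le (by fun_prop) hcoercive
  have hzero : f x₀ = 0 := by
    by_contra hne
    obtain ⟨x', hx'⟩ := hdesc x₀ hne
    have htri : c * dist x' x ≤ c * dist x' x₀ + c * dist x₀ x := by
      rw [← mul_add]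
      gcongr
      exact dist_triangle ..
    linarith [hmin x']
  exact ⟨x₀, hzero, by simpa [hzero] using hmin x⟩

variable {X Y : Type*} [NormedAddCommGroup X] [NormedSpace ℝ X] [NormedAddCommGroup Y]
  [NormedSpace ℝ Y] {F : X → Y} {K : ℝ}

theorem exists_norm_sub_add_lt_of_hasFDerivAt {F' : X →L[ℝ] Y} {x v : X} {y : Y}
    (hF : HasFDerivAt F F' x) (hK : 0 < K) (hv : F' v = y - F x)
    (hvK : ‖v‖ ≤ K * ‖F x - y‖) (hne : F x ≠ y) :
    ∃ x', ‖F x' - y‖ + (2 * K)⁻¹ * ‖x' - x‖ < ‖F x - y‖ := by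
  have hpos : 0 < ‖F x - y‖ := norm_pos_iff.2 (sub_ne_zero.2 hne)
  have hline : HasDerivAt (fun t : ℝ => F (x + t • v)) (y - F x) 0 := hv ▸ hF.hasLineDerivAt v
  have hlittle := (hasDerivAt_iff_isLittleO_nhds_zero.1 hline).def
    (show (0 : ℝ) < 1 / 4 * ‖F x - y‖ by positivity)
  obtain ⟨t, ht, ht0, ht1⟩ := ((hlittle.filter_mono nhdsWithin_le_nhds).and
    (Ioo_mem_nhdsGT (zero_lt_one' ℝ))).exists
  simp only [zero_add, zero_smul, add_zero, Real.norm_of_nonneg ht0.le] at ht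
  have hvalue : ‖F (x + t • v) - y‖ ≤ (1 - t) * ‖F x - y‖ + 1 / 4 * ‖F x - y‖ * t := by
    have hsplit : F (x + t • v) - y =
        (1 - t) • (F x - y) + (F (x + t • v) - F x - t • (y - F x)) := by module
    rw [hsplit]
    refine (norm_add_le _ _).trans (add_le_add ?_ ht)
    rw [norm_smul, Real.norm_of_nonneg (by linarith)]
  have hstep : (2 * K)⁻¹ * ‖x + t • v - x‖ ≤ 1 / 2 * (t * ‖F x - y‖) := by
    rw [add_sub_cancel_left, norm_smul, Real.norm_of_nonneg ht0.le]
    calc (2 * K)⁻¹ * (t * ‖v‖) ≤ (2 * K)⁻¹ * (t * (K * ‖F x - y‖)) := by gcongr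
      _ = 1 / 2 * (t * ‖F x - y‖) := by field_simp
  exact ⟨x + t • v, by linarith [mul_pos ht0 hpos]⟩

theorem exists_eq_of_bounded_right_inverse [ProperSpace X] {F' : X → X →L[ℝ] Y}
    (hF : ∀ x, HasFDerivAt F (F' x) x) (hK : 0 < K)
    (hinv : ∀ x u, ∃ v, F' x v = u ∧ ‖v‖ ≤ K * ‖u‖) (x : X) (y : Y) :
    ∃ x₀, F x₀ = y ∧ ‖x₀ - x‖ ≤ 2 * K * ‖F x - y‖ := by
  have hcont : Continuous F := continuous_iff_continuousAt.2 fun x => (hF x).continuousAt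
  obtain ⟨x₀, hzero, hdist⟩ := exists_eq_zero_of_descent (f := fun x => ‖F x - y‖)
    (c := (2 * K)⁻¹) (by fun_prop) (fun x => norm_nonneg _) (by positivity)
    (fun x hx => by
      obtain ⟨v, hv, hvK⟩ := hinv x (y - F x)
      simp only [dist_eq_norm]
      exact exists_norm_sub_add_lt_of_hasFDerivAt (hF x) hK hv (norm_sub_rev (F x) y ▸ hvK)
        (fun h => hx (by simp [h]))) x
  refine ⟨x₀, sub_eq_zero.1 (norm_eq_zero.1 hzero), ?_⟩
  rwa [dist_eq_norm, inv_mul_le_iff₀ (by positivity)] at hdist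

theorem exists_norm_toEuclideanCLM_inv_le (n : Type*) [Fintype n] [DecidableEq n] {δ : ℝ}
    (hδ : 0 < δ) (B : ℝ) :
    ∃ K > 0, ∀ A : Matrix n n ℝ, (∀ j k, |A j k| ≤ B) → δ ≤ |A.det| →
      ‖Matrix.toEuclideanCLM (𝕜 := ℝ) A⁻¹‖ ≤ K := by
  let S : Set (Matrix n n ℝ) := (Set.Icc (-B) B).matrix ∩ {A | δ ≤ |A.det|}
  have hS : IsCompact S :=
    isCompact_Icc.matrix.inter_right
      (isClosed_le continuous_const continuous_id.matrix_det.abs)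
  have hinv : ContinuousOn Inv.inv S := fun A hA =>
    (continuousAt_matrix_inv A (by
      rw [Ring.inverse_eq_inv']
      exact continuousAt_inv₀ (abs_pos.1 (hδ.trans_le hA.2)))).continuousWithinAt
  have hclm : Continuous (Matrix.toEuclideanCLM (n := n) (𝕜 := ℝ)) :=
    LinearMap.continuous_of_finiteDimensional
      (Matrix.toEuclideanCLM (n := n) (𝕜 := ℝ)).toAlgEquiv.toLinearMap
  obtain ⟨K, hK⟩ :=
    (hS.image_of_continuousOn (hclm.comp_continuousOn hinv)).isBounded.exists_norm_le
  exact ⟨max K 1, by positivity, fun A hA hdet =>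
    (hK _ ⟨A, ⟨fun j k => abs_le.1 (hA j k), hdet⟩, rfl⟩).trans (le_max_left ..)⟩

end ErrorBounds

section PartialGradients

variable {X Y : Type*} [NormedAddCommGroup X] [InnerProductSpace ℝ X]
  [NormedAddCommGroup Y] [InnerProductSpace ℝ Y] {Φ : X × Y → ℝ}

/-- The partial gradient `∇_x Φ` of a function `Φ(x, η)` of two variables. -/
def gradFst [CompleteSpace X] (Φ : X × Y → ℝ) (p : X × Y) : X := gradient (fun x => Φ (x, p.2)) p.1

/-- The partial gradient `∇_η Φ` of a function `Φ(x, η)` of two variables. -/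
def gradSnd [CompleteSpace Y] (Φ : X × Y → ℝ) (p : X × Y) : Y := gradient (fun η => Φ (p.1, η)) p.2

theorem gradFst_eq [CompleteSpace X] (hΦ : Differentiable ℝ Φ) (p : X × Y) :
    gradFst Φ p = (InnerProductSpace.toDual ℝ X).symm
      ((fderiv ℝ Φ p).comp (ContinuousLinearMap.inl ℝ X Y)) := by
  have hpartial : HasFDerivAt (fun x => Φ (x, p.2)) _ p.1 :=
    (hΦ p).hasFDerivAt.comp p.1 (hasFDerivAt_prodMk_left p.1 p.2)
  rw [gradFst, gradient, hpartial.fderiv]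

theorem gradSnd_eq [CompleteSpace Y] (hΦ : Differentiable ℝ Φ) (p : X × Y) :
    gradSnd Φ p = (InnerProductSpace.toDual ℝ Y).symm
      ((fderiv ℝ Φ p).comp (ContinuousLinearMap.inr ℝ X Y)) := by
  have hpartial : HasFDerivAt (fun η => Φ (p.1, η)) _ p.2 :=
    (hΦ p).hasFDerivAt.comp p.2 (hasFDerivAt_prodMk_right p.1 p.2)
  rw [gradSnd, gradient, hpartial.fderiv]

theorem fderiv_apply_eq_inner_add_inner [CompleteSpace X] [CompleteSpace Y]
    (hΦ : Differentiable ℝ Φ) (p e : X × Y) :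
    fderiv ℝ Φ p e = ⟪gradFst Φ p, e.1⟫ + ⟪gradSnd Φ p, e.2⟫ := by
  simp only [gradFst_eq hΦ, gradSnd_eq hΦ, InnerProductSpace.toDual_symm_apply,
    ContinuousLinearMap.comp_apply, ← map_add, ContinuousLinearMap.inl_apply,
    ContinuousLinearMap.inr_apply, Prod.mk_add_mk, add_zero, zero_add]

theorem norm_gradFst_sub_gradFst_le [CompleteSpace X] (hΦ : ContDiff ℝ 2 Φ) {B : ℝ}
    (hB : ∀ p, ‖iteratedFDeriv ℝ 2 Φ p‖ ≤ B) (p q : X × Y) :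
    ‖gradFst Φ p - gradFst Φ q‖ ≤ B * ‖p - q‖ := by
  have hdiff : Differentiable ℝ Φ := hΦ.differentiable (by simp)
  rw [gradFst_eq hdiff, gradFst_eq hdiff, ← map_sub, LinearIsometryEquiv.norm_map,
    ← ContinuousLinearMap.sub_comp]
  calc ‖(fderiv ℝ Φ p - fderiv ℝ Φ q).comp (ContinuousLinearMap.inl ℝ X Y)‖
      ≤ ‖fderiv ℝ Φ p - fderiv ℝ Φ q‖ * ‖ContinuousLinearMap.inl ℝ X Y‖ :=
        ContinuousLinearMap.opNorm_comp_le _ _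
    _ ≤ ‖fderiv ℝ Φ p - fderiv ℝ Φ q‖ :=
        mul_le_of_le_one_right (by positivity) (ContinuousLinearMap.norm_inl_le_one ℝ X Y)
    _ ≤ B * ‖p - q‖ := norm_fderiv_sub_fderiv_le hΦ hB p q

theorem norm_gradSnd_sub_gradSnd_le [CompleteSpace Y] (hΦ : ContDiff ℝ 2 Φ) {B : ℝ}
    (hB : ∀ p, ‖iteratedFDeriv ℝ 2 Φ p‖ ≤ B) (p q : X × Y) :
    ‖gradSnd Φ p - gradSnd Φ q‖ ≤ B * ‖p - q‖ := by
  have hdiff : Differentiable ℝ Φ := hΦ.differentiable (by simp)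
  rw [gradSnd_eq hdiff, gradSnd_eq hdiff, ← map_sub, LinearIsometryEquiv.norm_map,
    ← ContinuousLinearMap.sub_comp]
  calc ‖(fderiv ℝ Φ p - fderiv ℝ Φ q).comp (ContinuousLinearMap.inr ℝ X Y)‖
      ≤ ‖fderiv ℝ Φ p - fderiv ℝ Φ q‖ * ‖ContinuousLinearMap.inr ℝ X Y‖ :=
        ContinuousLinearMap.opNorm_comp_le _ _
    _ ≤ ‖fderiv ℝ Φ p - fderiv ℝ Φ q‖ :=
        mul_le_of_le_one_right (by positivity) (ContinuousLinearMap.norm_inr_le_one ℝ X Y)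
    _ ≤ B * ‖p - q‖ := norm_fderiv_sub_fderiv_le hΦ hB p q

theorem differentiable_gradSnd [CompleteSpace Y] (hΦ : ContDiff ℝ 2 Φ) :
    Differentiable ℝ (gradSnd Φ) := by
  have hfderiv : Differentiable ℝ (fderiv ℝ Φ) :=
    (hΦ.fderiv_right (m := 1) (by norm_num)).differentiable (by simp)
  rw [funext (gradSnd_eq (hΦ.differentiable (by simp)))]
  exact (InnerProductSpace.toDual ℝ Y).symm.toContinuousLinearEquiv.differentiable.comp
    (hfderiv.clm_comp (differentiable_const _))

end PartialGradients

section CanonicalTransformations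

theorem hasFDerivAt_toEuclideanCLM_jacobian {n : Type*} [Fintype n] [DecidableEq n]
    {G : EuclideanSpace ℝ n → EuclideanSpace ℝ n} {x : EuclideanSpace ℝ n}
    (hG : DifferentiableAt ℝ G x) :
    HasFDerivAt G (Matrix.toEuclideanCLM (𝕜 := ℝ) (Matrix.of fun k j =>
      fderiv ℝ (fun x' => G x' k) x (EuclideanSpace.single j 1))) x := by
  have hcoord : ∀ k, HasFDerivAt (fun x' => G x' k) (PiLp.proj 2 _ k ∘L fderiv ℝ G x) x := by
    simpa only [hasFDerivWithinAt_univ] using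
      hasFDerivWithinAt_euclidean.1 (hasFDerivWithinAt_univ.2 hG.hasFDerivAt)
  convert hG.hasFDerivAt
  refine ContinuousLinearMap.coe_injective
    ((EuclideanSpace.basisFun n ℝ).toBasis.ext fun j => ?_)
  ext k
  simp [(hcoord k).fderiv]

theorem mixedHess_transpose (d : ℕ) (Φ : P d → ℝ) (x η : E d) :
    (mixedHess d Φ x η).transpose = Matrix.of fun k j =>
      fderiv ℝ (fun x' => gradSnd Φ (x', η) k) x (EuclideanSpace.single j 1) := by
  ext k j
  have hcoord : ∀ x', gradSnd Φ (x', η) k =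
      fderiv ℝ (fun η' => Φ (x', η')) η (EuclideanSpace.single k 1) := fun x' => by
    rw [← InnerProductSpace.toDual_symm_apply, EuclideanSpace.inner_single_right]
    simp [gradSnd, gradient]
  simp only [Matrix.transpose_apply, mixedHess, Matrix.of_apply, hcoord]

/-- A tame phase, with smoothness and derivative bounds limited to order `N + 2`. -/
structure IsTame {d : ℕ} (N : ℕ) (δ B : ℝ) (Φ : P d → ℝ) : Prop where
  contDiff : ContDiff ℝ (N + 2) Φ
  norm_iteratedFDeriv_le : ∀ i, 2 ≤ i → i ≤ N + 2 → ∀ p, ‖iteratedFDeriv ℝ i Φ p‖ ≤ B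
  le_abs_det_mixedHess : ∀ x η, δ ≤ |(mixedHess d Φ x η).det|

/-- `χ` is the canonical transformation generated by the phase `Φ`. -/
def IsCanonicalTransformation {d : ℕ} (Φ : P d → ℝ) (χ : P d → P d) : Prop :=
  ∀ x η, χ (gradSnd Φ (x, η), η) = (x, gradFst Φ (x, η))

/-- The defect of the pair `(z, w)` from the relations `y = ∇_η Φ(x, η)`, `ξ = ∇_x Φ(x, η)`, where
`z = (y, η)` and `w = (x, ξ)`; it vanishes when `w = χ z`. -/
def canonicalDefect {d : ℕ} (Φ : P d → ℝ) (z w : P d) : P d :=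
  (gradFst Φ (w.1, z.2) - w.2, gradSnd Φ (w.1, z.2) - z.1)

namespace IsTame

variable {d N : ℕ} {δ B : ℝ} {Φ : P d → ℝ}

theorem contDiff_two (hΦ : IsTame N δ B Φ) : ContDiff ℝ 2 Φ :=
  hΦ.contDiff.of_le (by simp)

theorem norm_iteratedFDeriv_two_le (hΦ : IsTame N δ B Φ) (p : P d) :
    ‖iteratedFDeriv ℝ 2 Φ p‖ ≤ B :=
  hΦ.norm_iteratedFDeriv_le 2 le_rfl (by lia) p

theorem nonneg (hΦ : IsTame N δ B Φ) : 0 ≤ B :=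
  (norm_nonneg _).trans (hΦ.norm_iteratedFDeriv_two_le 0)

theorem hasFDerivAt_gradSnd (hΦ : IsTame N δ B Φ) (x η : E d) :
    HasFDerivAt (fun x' => gradSnd Φ (x', η))
      (Matrix.toEuclideanCLM (𝕜 := ℝ) (mixedHess d Φ x η).transpose) x := by
  rw [mixedHess_transpose]
  exact hasFDerivAt_toEuclideanCLM_jacobian
    ((differentiable_gradSnd hΦ.contDiff_two).comp (by fun_prop)).differentiableAt

theorem abs_mixedHess_le (hΦ : IsTame N δ B Φ) (x η : E d) (j k : Fin d) :
    |mixedHess d Φ x η j k| ≤ B := by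
  have hB := hΦ.nonneg
  set T := Matrix.toEuclideanCLM (𝕜 := ℝ) (mixedHess d Φ x η).transpose
  have hT : ‖T‖ ≤ B := (hΦ.hasFDerivAt_gradSnd x η).le_of_lip' hB
    (Filter.Eventually.of_forall fun x' => by
      simpa using norm_gradSnd_sub_gradSnd_le hΦ.contDiff_two hΦ.norm_iteratedFDeriv_two_le
        (x', η) (x, η))
  calc |mixedHess d Φ x η j k| = ‖T (EuclideanSpace.single j 1) k‖ := by
        simp [T, Matrix.mulVec_single]
    _ ≤ ‖T (EuclideanSpace.single j 1)‖ := PiLp.norm_apply_le _ _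
    _ ≤ B * ‖EuclideanSpace.single j (1 : ℝ)‖ := T.le_of_opNorm_le hT _
    _ = B := by simp

end IsTame

theorem exists_gradSnd_eq_of_isTame (d : ℕ) {δ : ℝ} (hδ : 0 < δ) (B : ℝ) :
    ∃ K : ℝ, ∀ (N : ℕ) (Φ : P d → ℝ), IsTame N δ B Φ → ∀ x η y : E d,
      ∃ x₀, gradSnd Φ (x₀, η) = y ∧ ‖x₀ - x‖ ≤ K * ‖gradSnd Φ (x, η) - y‖ := by
  obtain ⟨K, hK, hinv⟩ := exists_norm_toEuclideanCLM_inv_le (Fin d) hδ B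
  refine ⟨2 * K, fun N Φ hΦ x η y => ?_⟩
  refine exists_eq_of_bounded_right_inverse (hΦ.hasFDerivAt_gradSnd · η) hK (fun x' u => ?_) x y
  set H := (mixedHess d Φ x' η).transpose
  have hdet : δ ≤ |H.det| := by
    rw [Matrix.det_transpose]
    exact hΦ.le_abs_det_mixedHess x' η
  have hunit : IsUnit H.det := isUnit_iff_ne_zero.2 (abs_pos.1 (hδ.trans_le hdet))
  refine ⟨Matrix.toEuclideanCLM (𝕜 := ℝ) H⁻¹ u, ?_, ContinuousLinearMap.le_of_opNorm_le _
    (hinv H (fun j k => hΦ.abs_mixedHess_le x' η k j) hdet) u⟩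
  rw [← mul_apply_eq_comp, ← map_mul, Matrix.mul_nonsing_inv H hunit, map_one,
    one_apply_eq_self]

theorem ensq_nonneg {d : ℕ} (z : P d) : 0 ≤ ensq z := by
  unfold ensq
  positivity

theorem exists_ensq_sub_le_canonicalDefect (d : ℕ) {δ : ℝ} (hδ : 0 < δ) (B : ℝ) :
    ∃ A : ℝ, 1 ≤ A ∧ ∀ (N : ℕ) (Φ : P d → ℝ), IsTame N δ B Φ →
      ∀ χ, IsCanonicalTransformation Φ χ → ∀ z w,
        ensq (w - χ z) ≤ A * ensq (canonicalDefect Φ z w) := by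
  obtain ⟨K, hsolve⟩ := exists_gradSnd_eq_of_isTame d hδ B
  refine ⟨2 + K ^ 2 + 2 * (B * K) ^ 2, by nlinarith [sq_nonneg K, sq_nonneg (B * K)], ?_⟩
  intro N Φ hΦ χ hχ z w
  obtain ⟨x₀, hx₀, hdist⟩ := hsolve N Φ hΦ w.1 z.2 z.1
  have hχz : χ z = (x₀, gradFst Φ (x₀, z.2)) := by rw [← hχ x₀ z.2, hx₀]
  set v := canonicalDefect Φ z w with hv
  have hfst : ‖w.1 - x₀‖ ≤ K * ‖v.2‖ := by rwa [norm_sub_rev]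
  have hsnd : ‖w.2 - gradFst Φ (x₀, z.2)‖ ≤ ‖v.1‖ + B * K * ‖v.2‖ := by
    have hB := hΦ.nonneg
    calc ‖w.2 - gradFst Φ (x₀, z.2)‖
        = ‖(gradFst Φ (w.1, z.2) - gradFst Φ (x₀, z.2)) - v.1‖ := by
          simp [hv, canonicalDefect]
      _ ≤ ‖gradFst Φ (w.1, z.2) - gradFst Φ (x₀, z.2)‖ + ‖v.1‖ := norm_sub_le _ _
      _ ≤ B * ‖w.1 - x₀‖ + ‖v.1‖ := by
          gcongr
          simpa using norm_gradFst_sub_gradFst_le hΦ.contDiff_two hΦ.norm_iteratedFDeriv_two_le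
            (w.1, z.2) (x₀, z.2)
      _ ≤ B * (K * ‖v.2‖) + ‖v.1‖ := by gcongr
      _ = ‖v.1‖ + B * K * ‖v.2‖ := by ring
  calc ensq (w - χ z) = ‖w.1 - x₀‖ ^ 2 + ‖w.2 - gradFst Φ (x₀, z.2)‖ ^ 2 := by
        simp only [hχz, ensq, Prod.fst_sub, Prod.snd_sub]
    _ ≤ (K * ‖v.2‖) ^ 2 + (‖v.1‖ + B * K * ‖v.2‖) ^ 2 := by gcongr
    _ ≤ (K * ‖v.2‖) ^ 2 + 2 * (‖v.1‖ ^ 2 + (B * K * ‖v.2‖) ^ 2) := by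
        gcongr
        exact add_sq_le
    _ ≤ (2 + K ^ 2 + 2 * (B * K) ^ 2) * ensq v := by
        rw [ensq]
        nlinarith [mul_nonneg (sq_nonneg K) (sq_nonneg ‖v.1‖), sq_nonneg ‖v.2‖,
          mul_nonneg (sq_nonneg (B * K)) (sq_nonneg ‖v.1‖)]

end CanonicalTransformations

section WavePackets

variable {d : ℕ}

instance isAddHaarMeasure_volume_phaseSpace : (volume : Measure (P d)).IsAddHaarMeasure :=
  inferInstanceAs ((volume : Measure (E d)).prod (volume : Measure (E d))).IsAddHaarMeasure

/-- The Euclidean inner product of `ℝ^{2d}`, as a bilinear map on `P d`, whose product norm is not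
Euclidean. -/
def phaseInner (d : ℕ) : P d →L[ℝ] P d →L[ℝ] ℝ :=
  (innerSL ℝ).bilinearComp (.fst ℝ (E d) (E d)) (.fst ℝ (E d) (E d)) +
    (innerSL ℝ).bilinearComp (.snd ℝ (E d) (E d)) (.snd ℝ (E d) (E d))

theorem phaseInner_apply (p q : P d) : phaseInner d p q = ⟪p.1, q.1⟫ + ⟪p.2, q.2⟫ := by
  simp [phaseInner]

theorem phaseInner_self (p : P d) : phaseInner d p p = ensq p := by
  simp [phaseInner_apply, ensq]

theorem sq_norm_le_ensq (p : P d) : ‖p‖ ^ 2 ≤ ensq p := by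
  rw [Prod.norm_def, ensq]
  rcases max_choice ‖p.1‖ ‖p.2‖ with h | h <;> rw [h] <;> simp

theorem fderiv_eq_phaseInner {Φ : P d → ℝ} (hΦ : Differentiable ℝ Φ) (p : P d) :
    fderiv ℝ Φ p = phaseInner d (gradFst Φ p, gradSnd Φ p) := by
  refine ContinuousLinearMap.ext fun e => ?_
  rw [phaseInner_apply, fderiv_apply_eq_inner_add_inner hΦ]

theorem hasFDerivAt_half_ensq_sub (p₀ p : P d) :
    HasFDerivAt (fun p => ensq (p - p₀) / 2) (phaseInner d (p - p₀)) p := by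
  have hsub : HasFDerivAt (fun p : P d => p - p₀) (.id ℝ (P d)) p := (hasFDerivAt_id p).sub_const p₀
  simp only [ensq, div_eq_mul_inv]
  refine ((hsub.fst.norm_sq.add hsub.snd.norm_sq).mul_const 2⁻¹).congr_fderiv
    (ContinuousLinearMap.ext fun e => ?_)
  simp [phaseInner_apply]
  ring

/-- The complex phase, centred at `(x, η)` where `z = (y, η)` and `w = (x, ξ)`, of the oscillatory
integral that gives the wave-packet coefficient `⟨T π(z)g, π(w)g⟩`. -/
def packetPhase (Φ : P d → ℝ) (z w p : P d) : ℂ :=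
  Complex.I * ((Φ p - phaseInner d (w.2, z.1) p : ℝ) : ℂ) - ((ensq (p - (w.1, z.2)) / 2 : ℝ) : ℂ)

theorem hasFDerivAt_packetPhase {Φ : P d → ℝ} (hΦ : Differentiable ℝ Φ) (z w p : P d) :
    HasFDerivAt (packetPhase Φ z w)
      (Complex.I • Complex.ofRealCLM ∘L (fderiv ℝ Φ p - phaseInner d (w.2, z.1)) -
        Complex.ofRealCLM ∘L phaseInner d (p - (w.1, z.2))) p := by
  have hosc : HasFDerivAt (fun p => ((Φ p - phaseInner d (w.2, z.1) p : ℝ) : ℂ))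
      (Complex.ofRealCLM ∘L (fderiv ℝ Φ p - phaseInner d (w.2, z.1))) p :=
    Complex.ofRealCLM.hasFDerivAt.comp p
      ((hΦ p).hasFDerivAt.sub (phaseInner d (w.2, z.1)).hasFDerivAt)
  have hgauss : HasFDerivAt (fun p => ((ensq (p - (w.1, z.2)) / 2 : ℝ) : ℂ))
      (Complex.ofRealCLM ∘L phaseInner d (p - (w.1, z.2))) p :=
    Complex.ofRealCLM.hasFDerivAt.comp p (hasFDerivAt_half_ensq_sub (w.1, z.2) p)
  exact (hosc.const_mul Complex.I).sub hgauss

theorem fderiv_packetPhase_center {Φ : P d → ℝ} (hΦ : Differentiable ℝ Φ) (z w : P d) :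
    fderiv ℝ (packetPhase Φ z w) (w.1, z.2) =
      Complex.I • Complex.ofRealCLM ∘L phaseInner d (canonicalDefect Φ z w) := by
  rw [(hasFDerivAt_packetPhase hΦ z w _).fderiv, fderiv_eq_phaseInner hΦ, ← map_sub]
  simp [canonicalDefect]

theorem ensq_canonicalDefect_le {Φ : P d → ℝ} (hΦ : Differentiable ℝ Φ) (z w : P d) :
    ensq (canonicalDefect Φ z w) ≤ ‖fderiv ℝ (packetPhase Φ z w) (w.1, z.2)‖ ^ 2 := by
  set v := canonicalDefect Φ z w
  set L := fderiv ℝ (packetPhase Φ z w) (w.1, z.2) with hL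
  have hself : ensq v ≤ ‖L‖ * ‖v‖ := by
    calc ensq v = ‖L v‖ := by
          simp [hL, fderiv_packetPhase_center hΦ, v, phaseInner_self, abs_of_nonneg (ensq_nonneg _)]
      _ ≤ ‖L‖ * ‖v‖ := L.le_opNorm v
  nlinarith [sq_norm_le_ensq v, sq_nonneg (‖L‖ - ‖v‖)]

theorem re_packetPhase (Φ : P d → ℝ) (z w p : P d) :
    (packetPhase Φ z w p).re = -(ensq (p - (w.1, z.2)) / 2) := by
  simp [packetPhase]

theorem packetPhase_eq_I_mul_add (Φ : P d → ℝ) (z w : P d) :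
    packetPhase Φ z w = fun p => Complex.I * (Φ p : ℂ) + packetPhase 0 z w p := by
  funext p
  simp only [packetPhase, Pi.zero_apply]
  push_cast
  ring

theorem contDiff_packetPhase {n : WithTop ℕ∞} {Φ : P d → ℝ} (hΦ : ContDiff ℝ n Φ) (z w : P d) :
    ContDiff ℝ n (packetPhase Φ z w) := by
  have hosc : ContDiff ℝ n (fun p => Φ p - phaseInner d (w.2, z.1) p) := by fun_prop
  have hgauss : ContDiff ℝ n (fun p => ensq (p - (w.1, z.2)) / 2) := by
    simp only [← phaseInner_self]
    fun_prop
  exact (contDiff_const.mul (Complex.ofRealCLM.contDiff.comp hosc)).sub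
    (Complex.ofRealCLM.contDiff.comp hgauss)

theorem norm_iteratedFDeriv_I_mul_ofReal {V : Type*} [NormedAddCommGroup V] [NormedSpace ℝ V]
    {f : V → ℝ} {i : ℕ} (hf : ContDiff ℝ i f) (p : V) :
    ‖iteratedFDeriv ℝ i (fun p => Complex.I * (f p : ℂ)) p‖ = ‖iteratedFDeriv ℝ i f p‖ := by
  have hcomp : (fun p => Complex.I * (f p : ℂ)) =
      LinearIsometry.toSpanSingleton ℝ ℂ Complex.norm_I ∘ f := by
    funext p
    simp [mul_comm]
  rw [hcomp, LinearIsometry.norm_iteratedFDeriv_comp_left _ hf.contDiffAt le_rfl]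

theorem exists_norm_iteratedFDeriv_packetPhase_zero_le (d : ℕ) :
    ∃ K : ℝ, ∀ (z w p : P d) (i : ℕ), 2 ≤ i → ‖iteratedFDeriv ℝ i (packetPhase 0 z w) p‖ ≤ K := by
  let T : P d →L[ℝ] P d →L[ℝ] ℂ :=
    -(ContinuousLinearMap.compL ℝ (P d) ℝ ℂ Complex.ofRealCLM ∘L phaseInner d)
  refine ⟨‖T‖, fun z w p i hi => norm_iteratedFDeriv_le_of_fderiv_eq_add_const
    (ℓ := -(Complex.I • Complex.ofRealCLM ∘L phaseInner d (w.2, z.1)) - T (w.1, z.2))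
    (fun q => ?_) hi p⟩
  rw [(hasFDerivAt_packetPhase (by fun_prop) z w q).fderiv]
  refine ContinuousLinearMap.ext fun e => ?_
  rw [(phaseInner d).map_sub q (w.1, z.2)]
  simp [T]
  ring

theorem exists_isDampedPhase_packetPhase (d : ℕ) :
    ∃ K : ℝ, ∀ (N : ℕ) (δ B : ℝ) (Φ : P d → ℝ), IsTame N δ B Φ → ∀ z w,
      IsDampedPhase N (B + K) (1 / 2) (w.1, z.2) (packetPhase Φ z w) := by
  obtain ⟨K, hK⟩ := exists_norm_iteratedFDeriv_packetPhase_zero_le d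
  refine ⟨K, fun N δ B Φ hΦ z w => ⟨contDiff_packetPhase hΦ.contDiff z w, ?_, ?_⟩⟩
  · intro i hi hi' p
    have hΦi : ContDiff ℝ i Φ := hΦ.contDiff.of_le (by exact_mod_cast hi')
    have hosc : ContDiff ℝ i (fun p => Complex.I * (Φ p : ℂ)) :=
      contDiff_const.mul (Complex.ofRealCLM.contDiff.comp hΦi)
    have hquad : ContDiff ℝ i (packetPhase (0 : P d → ℝ) z w) :=
      contDiff_packetPhase contDiff_const z w
    rw [packetPhase_eq_I_mul_add, fun_iteratedFDeriv_add_apply hosc.contDiffAt hquad.contDiffAt]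
    refine (norm_add_le _ _).trans (add_le_add ?_ (hK z w p i hi))
    rw [norm_iteratedFDeriv_I_mul_ofReal hΦi]
    exact hΦ.norm_iteratedFDeriv_le i hi hi' p
  · intro p
    rw [re_packetPhase]
    linarith [sq_norm_le_ensq (p - (w.1, z.2))]

theorem FT_pk (z : P d) (η : E d) :
    FT d (pk d z) η = ((2 * π) ^ ((d : ℝ) / 2) : ℝ) *
      Complex.exp (-Complex.I * (⟪z.1, η - z.2⟫ : ℂ)) * Real.exp (-‖η - z.2‖ ^ 2 / 2) := by
  have hgauss := GaussianFourier.integral_cexp_neg_mul_sq_norm_add (V := E d) (b := 1 / 2)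
    (by norm_num) (-Complex.I) (η - z.2)
  have hconst : ((π : ℂ) / (1 / 2)) ^ ((d : ℂ) / 2) = ((2 * π) ^ ((d : ℝ) / 2) : ℝ) := by
    rw [Complex.ofReal_cpow (by positivity)]
    push_cast
    congr 1
    ring
  have hexp : (-Complex.I) ^ 2 * (‖η - z.2‖ : ℂ) ^ 2 / (4 * (1 / 2)) =
      ((-‖η - z.2‖ ^ 2 / 2 : ℝ) : ℂ) := by
    push_cast
    rw [neg_sq, Complex.I_sq]
    ring
  rw [finrank_euclideanSpace, Fintype.card_fin, hconst, hexp] at hgauss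
  have hshift : ∀ v : E d, Complex.exp (-Complex.I * (⟪v + z.1, η⟫ : ℂ)) * pk d z (v + z.1) =
      Complex.exp (-Complex.I * (⟪z.1, η - z.2⟫ : ℂ)) *
        Complex.exp (-(1 / 2) * ‖v‖ ^ 2 + -Complex.I * (⟪η - z.2, v⟫ : ℂ)) := by
    intro v
    rw [pk, Complex.ofReal_exp, ← Complex.exp_add, ← Complex.exp_add, ← Complex.exp_add,
      real_inner_comm v (η - z.2)]
    congr 1
    simp only [inner_add_left, inner_sub_right, add_sub_cancel_right]
    push_cast
    ring
  rw [FT, ← integral_add_right_eq_self _ z.1]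
  simp only [hshift]
  rw [integral_const_mul, hgauss, Complex.ofReal_exp]
  ring

/-- The Fourier integral operator with phase `Φ` and amplitude `a`, applied to `f`. -/
def fourierIntegralOp (d : ℕ) (Φ : P d → ℝ) (a : P d → ℂ) (f : E d → ℂ) (x : E d) : ℂ :=
  (((2 * π) ^ d : ℝ) : ℂ)⁻¹ *
    ∫ η : E d, Complex.exp (Complex.I * (Φ (x, η) : ℂ)) * a (x, η) * FT d f η

theorem cexp_mul_FT_pk_mul_pkbar (Φ : P d → ℝ) (z w : P d) (x η : E d) :
    Complex.exp (Complex.I * (Φ (x, η) : ℂ)) * FT d (pk d z) η * pkbar d w x =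
      ((2 * π) ^ ((d : ℝ) / 2) : ℝ) * Complex.exp (Complex.I * (⟪z.1, z.2⟫ : ℂ)) *
        Complex.exp (packetPhase Φ z w (x, η)) := by
  have hexp : Complex.exp (Complex.I * (Φ (x, η) : ℂ)) *
      Complex.exp (-Complex.I * (⟪z.1, η - z.2⟫ : ℂ)) * Real.exp (-‖η - z.2‖ ^ 2 / 2) *
        pkbar d w x = Complex.exp (Complex.I * (⟪z.1, z.2⟫ : ℂ)) *
          Complex.exp (packetPhase Φ z w (x, η)) := by
    simp only [pkbar, packetPhase, Complex.ofReal_exp, ← Complex.exp_add]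
    congr 1
    rw [phaseInner_apply, real_inner_comm x w.2, ensq, inner_sub_right]
    simp only [Prod.fst_sub, Prod.snd_sub]
    push_cast
    ring
  rw [FT_pk]
  linear_combination (((2 * π) ^ ((d : ℝ) / 2) : ℝ) : ℂ) * hexp

theorem norm_integral_fourierIntegralOp_pk_mul_pkbar {Φ : P d → ℝ} {a : P d → ℂ} {z w : P d}
    (hint : Integrable (fun p => Complex.exp (packetPhase Φ z w p) * a p)) :
    ‖∫ x, fourierIntegralOp d Φ a (pk d z) x * pkbar d w x‖ =
      (2 * π) ^ (-((d : ℝ) / 2)) * ‖∫ p, Complex.exp (packetPhase Φ z w p) * a p‖ := by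
  set c : ℂ := (((2 * π) ^ d : ℝ) : ℂ)⁻¹ * (((2 * π) ^ ((d : ℝ) / 2) : ℝ) *
    Complex.exp (Complex.I * (⟪z.1, z.2⟫ : ℂ))) with hc
  have hinner : ∀ x, fourierIntegralOp d Φ a (pk d z) x * pkbar d w x =
      c * ∫ η, Complex.exp (packetPhase Φ z w (x, η)) * a (x, η) := by
    intro x
    have hpoint : ∀ η, Complex.exp (Complex.I * (Φ (x, η) : ℂ)) * a (x, η) * FT d (pk d z) η *
        pkbar d w x = ((2 * π) ^ ((d : ℝ) / 2) : ℝ) * Complex.exp (Complex.I * (⟪z.1, z.2⟫ : ℂ)) *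
          (Complex.exp (packetPhase Φ z w (x, η)) * a (x, η)) := fun η => by
      linear_combination a (x, η) * cexp_mul_FT_pk_mul_pkbar Φ z w x η
    rw [fourierIntegralOp, mul_assoc, ← integral_mul_const, funext hpoint, integral_const_mul, hc,
      ← mul_assoc]
  have hnorm : ‖c‖ = (2 * π) ^ (-((d : ℝ) / 2)) := by
    have hpi : 0 < 2 * π := by positivity
    have hunit : ‖Complex.exp (Complex.I * (⟪z.1, z.2⟫ : ℂ))‖ = 1 := by
      simp [Complex.norm_exp]
    rw [hc, norm_mul, norm_mul, hunit, norm_inv, Complex.norm_of_nonneg (by positivity),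
      Complex.norm_of_nonneg (by positivity), mul_one, ← Real.rpow_natCast,
      ← Real.rpow_neg hpi.le, ← Real.rpow_add hpi]
    congr 1
    ring
  rw [Measure.volume_eq_prod] at hint ⊢
  rw [integral_prod _ hint, ← hnorm, ← norm_mul, ← integral_const_mul]
  simp only [hinner]

end WavePackets

section WavePacketMatrix

theorem exists_norm_wavePacketCoeff_le_canonicalDefect (d N : ℕ) (B : ℝ) :
    ∃ K : ℝ, ∀ (δ : ℝ) (Φ : P d → ℝ), IsTame N δ B Φ → ∀ (z w : P d) (R : ℝ) (a : P d → ℂ),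
      HasPolyGrowth (w.1, z.2) N 0 R a →
        (1 + ensq (canonicalDefect Φ z w)) ^ ((N : ℝ) / 2) *
          ‖∫ x, fourierIntegralOp d Φ a (pk d z) x * pkbar d w x‖ ≤ K * R := by
  obtain ⟨B', hB'⟩ := exists_isDampedPhase_packetPhase d
  obtain ⟨K, hK⟩ := exists_one_add_norm_fderiv_pow_mul_norm_integral_le
    (volume : Measure (P d)) N (B + B') one_half_pos
  refine ⟨(2 * π) ^ (-((d : ℝ) / 2)) * K, fun δ Φ hΦ z w R a ha => ?_⟩
  have hφ := hB' N δ B Φ hΦ z w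
  set t := ‖fderiv ℝ (packetPhase Φ z w) (w.1, z.2)‖
  have hensq : 0 ≤ ensq (canonicalDefect Φ z w) := ensq_nonneg _
  have hdefect : (1 + ensq (canonicalDefect Φ z w)) ^ ((N : ℝ) / 2) ≤ (1 + t) ^ N := by
    calc (1 + ensq (canonicalDefect Φ z w)) ^ ((N : ℝ) / 2)
        ≤ ((1 + t) ^ 2) ^ ((N : ℝ) / 2) := by
          gcongr
          have := ensq_canonicalDefect_le (hΦ.contDiff_two.differentiable (by simp)) z w
          nlinarith [norm_nonneg (fderiv ℝ (packetPhase Φ z w) (w.1, z.2))]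
      _ = (1 + t) ^ N := by
          rw [← Real.rpow_natCast_mul (by positivity), ← Real.rpow_natCast]
          congr 1
          push_cast
          ring
  rw [norm_integral_fourierIntegralOp_pk_mul_pkbar (hφ.integrable_cexp_mul one_half_pos ha),
    mul_left_comm, mul_assoc]
  refine mul_le_mul_of_nonneg_left ?_ (by positivity)
  calc (1 + ensq (canonicalDefect Φ z w)) ^ ((N : ℝ) / 2) *
        ‖∫ p, Complex.exp (packetPhase Φ z w p) * a p‖
      ≤ (1 + t) ^ N * ‖∫ p, Complex.exp (packetPhase Φ z w p) * a p‖ := by gcongr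
    _ ≤ K * R := hK _ _ hφ R a ha

theorem exists_one_add_ensq_sub_rpow_le (d : ℕ) {m r : ℝ} (hmr : m ≤ r) (hr : 0 ≤ r) {δ : ℝ}
    (hδ : 0 < δ) (B : ℝ) :
    ∃ A > 0, ∀ (N : ℕ) (Φ : P d → ℝ), IsTame N δ B Φ → ∀ χ, IsCanonicalTransformation Φ χ →
      ∀ z w, (1 + ensq (w - χ z)) ^ (m / 2) ≤
        A * (1 + ensq (canonicalDefect Φ z w)) ^ (r / 2) := by
  obtain ⟨A, hA, hdist⟩ := exists_ensq_sub_le_canonicalDefect d hδ B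
  refine ⟨A ^ (r / 2), by positivity, fun N Φ hΦ χ hχ z w => ?_⟩
  have hsub : 0 ≤ ensq (w - χ z) := ensq_nonneg _
  have hdefect : 0 ≤ ensq (canonicalDefect Φ z w) := ensq_nonneg _
  rw [← Real.mul_rpow (by positivity) (by positivity)]
  calc (1 + ensq (w - χ z)) ^ (m / 2) ≤ (1 + ensq (w - χ z)) ^ (r / 2) := by
        gcongr
        linarith
    _ ≤ (A * (1 + ensq (canonicalDefect Φ z w))) ^ (r / 2) := by
        gcongr
        linarith [hdist N Φ hΦ χ hχ z w]

theorem stmt14_general (d : ℕ) {m : ℝ} {N : ℕ} (hmN : m ≤ N) {δ : ℝ} (hδ : 0 < δ) (B : ℝ) :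
    ∃ C > 0, ∀ Φ : P d → ℝ, IsTame N δ B Φ → ∀ χ, IsCanonicalTransformation Φ χ →
      ∀ a : P d → ℂ, ContDiff ℝ N a →
      ∀ R : ℝ, (∀ i ≤ N, ∀ p, ‖iteratedFDeriv ℝ i a p‖ ≤ R) →
      ∀ z w, ‖∫ x, fourierIntegralOp d Φ a (pk d z) x * pkbar d w x‖ ≤
        C * R * (1 + ensq (w - χ z)) ^ (-(m / 2)) := by
  obtain ⟨A, hA, hweight⟩ := exists_one_add_ensq_sub_rpow_le d hmN N.cast_nonneg hδ B
  obtain ⟨K, hK⟩ := exists_norm_wavePacketCoeff_le_canonicalDefect d N B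
  refine ⟨A * max K 1, by positivity, fun Φ hΦ χ hχ a ha R hR z w => ?_⟩
  have hgrowth : HasPolyGrowth (w.1, z.2) N 0 R a := .of_bounded ha hR
  have hR0 : 0 ≤ R := hgrowth.nonneg
  have hpos : 0 < 1 + ensq (w - χ z) := by linarith [ensq_nonneg (w - χ z)]
  set J := ‖∫ x, fourierIntegralOp d Φ a (pk d z) x * pkbar d w x‖
  rw [Real.rpow_neg hpos.le, ← div_eq_mul_inv, le_div_iff₀' (by positivity)]
  calc (1 + ensq (w - χ z)) ^ (m / 2) * J
      ≤ A * (1 + ensq (canonicalDefect Φ z w)) ^ ((N : ℝ) / 2) * J := by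
        gcongr
        exact hweight N Φ hΦ χ hχ z w
    _ = A * ((1 + ensq (canonicalDefect Φ z w)) ^ ((N : ℝ) / 2) * J) := mul_assoc ..
    _ ≤ A * (K * R) := mul_le_mul_of_nonneg_left (hK δ Φ hΦ z w R a hgrowth) hA.le
    _ ≤ A * (max K 1 * R) := by
        gcongr
        exact le_max_left ..
    _ = A * max K 1 * R := (mul_assoc ..).symm

end WavePacketMatrix

/-- a Fourier integral operator
`T f (x) = (2π)^{-d} ∫ exp(iΦ(x,η)) a(x,η) ℱf(η) dη` with a tame phase `Φ`
(derivative bounds `B` for orders between `2` and `M`, mixed Hessian determinant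
`≥ δ`) and amplitude `a ∈ S⁰₀,₀` belongs to `FIO(χ)`, `χ` the canonical
transformation generated by `Φ` (`χ(∇_ηΦ(x,η), η) = (x, ∇_xΦ(x,η))`): for every
`m ≥ 0` the Gaussian wave-packet matrix of `T` is bounded by
`C·‖a‖_{m'}·⟨w - χ z⟩^{-m}`, with `m', M` depending only on `m` (and `d`) and `C`
depending only on `m, d, δ, B`.  The bound `R` plays the role of `‖a‖_{m'}`. -/
theorem stmt14 (d : ℕ) (hd : 1 ≤ d) :
    ∀ m : ℝ, 0 ≤ m →
    ∃ m' M : ℕ, 2 ≤ M ∧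
    ∀ δ > (0 : ℝ), ∀ B > (0 : ℝ), ∃ C > (0 : ℝ),
    ∀ Φ : P d → ℝ, ContDiff ℝ (⊤ : ℕ∞) Φ →
      (∀ i : ℕ, 2 ≤ i → i ≤ M → ∀ zz : P d, ‖iteratedFDeriv ℝ i Φ zz‖ ≤ B) →
      (∀ x η : E d, δ ≤ |(mixedHess d Φ x η).det|) →
    ∀ χ : P d → P d,
      (∀ x η : E d,
        χ (gradient (fun η' => Φ (x, η')) η, η) = (x, gradient (fun x' => Φ (x', η)) x)) →
    ∀ a : P d → ℂ, ContDiff ℝ (⊤ : ℕ∞) a →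
    ∀ R : ℝ, 0 ≤ R →
      (∀ i : ℕ, i ≤ m' → ∀ zz : P d, ‖iteratedFDeriv ℝ i a zz‖ ≤ R) →
    ∀ z w : P d,
      ‖∫ x : E d,
          ((((2 * π) ^ d : ℝ) : ℂ)⁻¹ *
            ∫ η : E d, Complex.exp (Complex.I * (Φ (x, η) : ℂ)) * a (x, η) *
              FT d (pk d z) η) * pkbar d w x‖ ≤
        C * R * (1 + ensq (w - χ z)) ^ (-(m / 2)) := by
  intro m _
  refine ⟨⌈m⌉₊, ⌈m⌉₊ + 2, by simp, fun δ hδ B _ => ?_⟩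
  obtain ⟨C, hC, hbound⟩ := stmt14_general d (Nat.le_ceil m) hδ B
  exact ⟨C, hC, fun Φ hΦ hΦB hdet χ hχ a ha R _ haR z w =>
    hbound Φ ⟨mod_cast contDiff_infty.1 hΦ (⌈m⌉₊ + 2), hΦB, hdet⟩ χ hχ a
      (contDiff_infty.1 ha _) R haR z w⟩
end
end

section
/- Let d ≥ 1, 1 < p ≤ 2, and k₁, k₂ ∈ ℝ. Then there exists a constant C > 0 such that ‖(1−Δ)^{k₂/2}(ℱf)‖_{L^p(ℝ^d)} ≤ C·‖(1−Δ)^{k₁/2} f‖_{L^p(ℝ^d)} for every Schwartz function f on ℝ^d, if and only if k₁ ≥ 2d(1/p − 1/2) and k₂ ≤ 0. -/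
open MeasureTheory Complex Real
open scoped ENNReal RealInnerProductSpace

noncomputable section

/-- The Bessel potential `(1-Δ)^{k/2} u = ℱ⁻¹((1+|ξ|²)^{k/2} ℱu)`. -/
def bessel (d : ℕ) (k : ℝ) (u : E d → ℂ) (x : E d) : ℂ :=
  (((2 * π) ^ d : ℝ) : ℂ)⁻¹ *
    ∫ ξ, Complex.exp (Complex.I * (⟪x, ξ⟫ : ℂ)) * (((1 + ‖ξ‖ ^ 2) ^ (k / 2) : ℝ) : ℂ) *
      FT d u ξ

/-!
Sufficiency. The Hardy–Littlewood–Paley inequality `∫ |ξ|^{d(p-2)} |ℱg|ᵖ ≲ ‖g‖ₚᵖ` follows by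
Marcinkiewicz interpolation between the trivial weak `(1, 1)` bound and Plancherel's theorem for
the operator `g ↦ |ℱg| |ξ|ᵈ`, with respect to the measure `|ξ|^{-2d} dξ`. Since
`⟨ξ⟩^{d(p-2)} ≤ |ξ|^{d(p-2)}`, taking `g = (1-Δ)^{k₁/2} f` settles `k₂ = 0`. For `k₂ < 0`,
`(1-Δ)^{k₂/2}` is convolution with a probability measure, a Gamma mixture of Gaussian laws, hence a
contraction of `Lᵖ`.

Necessity. As `ℱ` conjugates Bessel potentials into multiplications, pairing with Schwartz functions
turns the bound into
`|∫ ⟨x⟩^{k₂} f g| ≤ C ‖f‖_{p,k₁} ‖ℱ⁻¹g‖_q` and `|∫ ⟨ξ⟩^{-k₁} f g| ≤ C ‖ℱ⁻¹f‖_p ‖g‖_{q,-k₂}`,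
where `q` is the conjugate exponent. Translating a bump by `ε⁻¹c` leaves the right-hand side of the
first unchanged while the left-hand side is of order `ε^{-k₂}`. Dilating a bump supported away from
the origin, `ψ(ε ·)`, gives order `ε^{k₁-d}` on the left of the second and at most
`ε^{d/p-d} ε^{-d/q}` on the right. Letting `ε → 0` yields both conditions.
-/

open scoped FourierTransform SchwartzMap ContDiff

section MarcinkiewiczInterpolation

variable {X Y F : Type*} {mX : MeasurableSpace X} {mY : MeasurableSpace Y}
  [NormedAddCommGroup F] {μ : Measure X} {ν : Measure Y} {p p₀ p₁ : ℝ}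

/-- The operator `T` is of weak type `(p, p)` with constant `A` on the class `D` of functions:
the distribution function of `T g` at `t` is at most `A t⁻ᵖ ‖g‖ₚᵖ`. -/
def HasWeakType (T : (X → F) → Y → ℝ) (D : Set (X → F)) (p : ℝ) (μ : Measure X) (ν : Measure Y)
    (A : ℝ≥0∞) : Prop :=
  ∀ g ∈ D, ∀ t : ℝ, 0 < t →
    ν {y | t < T g y} ≤ A * (ENNReal.ofReal (t ^ (-p)) * ∫⁻ x, ‖g x‖ₑ ^ p ∂μ)

lemma lintegral_Ioi_rpow_mul_setLIntegral_lt_norm (hp₀ : 0 ≤ p₀) (hp : p₀ < p) {g : X → F}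
    (hg : AEStronglyMeasurable g μ) :
    ∫⁻ t in Set.Ioi (0 : ℝ),
        ENNReal.ofReal (t ^ (p - p₀ - 1)) * ∫⁻ x in {x | t < ‖g x‖}, ‖g x‖ₑ ^ p₀ ∂μ =
      (ENNReal.ofReal (p - p₀))⁻¹ * ∫⁻ x, ‖g x‖ₑ ^ p ∂μ := by
  have hpos : 0 < p - p₀ := sub_pos.2 hp
  have hgp : AEMeasurable (fun x ↦ ‖g x‖ₑ ^ p₀) μ := hg.enorm.pow_const p₀
  have layer := lintegral_rpow_eq_lintegral_meas_lt_mul (μ.withDensity fun x ↦ ‖g x‖ₑ ^ p₀)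
    (.of_forall fun x ↦ norm_nonneg (g x))
    (hg.norm.aemeasurable.mono_ac (withDensity_absolutelyContinuous _ _)) hpos
  have hlevel (t : ℝ) : NullMeasurableSet {x | t < ‖g x‖} μ :=
    nullMeasurableSet_lt aemeasurable_const hg.norm.aemeasurable
  have hmass (x : X) : ‖g x‖ₑ ^ p₀ * ENNReal.ofReal (‖g x‖ ^ (p - p₀)) = ‖g x‖ₑ ^ p := by
    rw [← ENNReal.ofReal_rpow_of_nonneg (norm_nonneg _) hpos.le, ofReal_norm,
      ← ENNReal.rpow_add_of_nonneg _ _ hp₀ hpos.le, add_sub_cancel]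
  rw [lintegral_withDensity_eq_lintegral_mul₀ hgp
    (hg.norm.aemeasurable.pow_const _).ennreal_ofReal] at layer
  simp only [Pi.mul_apply, hmass, withDensity_apply₀ _ (hlevel _)] at layer
  rw [layer, ← mul_assoc, ENNReal.inv_mul_cancel (by simpa using hp) ENNReal.ofReal_ne_top, one_mul]
  simp only [mul_comm]

lemma lintegral_Ici_rpow {a b : ℝ} (ha : a < -1) (hb : 0 < b) :
    ∫⁻ t in Set.Ici b, ENNReal.ofReal (t ^ a) = ENNReal.ofReal (-b ^ (a + 1) / (a + 1)) := by
  rw [← restrict_Ioi_eq_restrict_Ici, ← integral_Ioi_rpow_of_lt ha hb,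
    ofReal_integral_eq_lintegral_ofReal (integrableOn_Ioi_rpow_of_lt ha hb)]
  exact (ae_restrict_mem measurableSet_Ioi).mono fun t ht ↦ Real.rpow_nonneg (hb.trans ht).le a

lemma lintegral_Ioi_indicator_Ici_rpow_mul (hp : 0 < p) (hp₁ : p < p₁) (u : F) :
    ∫⁻ t in Set.Ioi (0 : ℝ), (Set.Ici ‖u‖).indicator
        (fun t ↦ ENNReal.ofReal (t ^ (p - p₁ - 1)) * ‖u‖ₑ ^ p₁) t =
      (ENNReal.ofReal (p₁ - p))⁻¹ * ‖u‖ₑ ^ p := by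
  rcases eq_or_ne u 0 with rfl | hu
  · simp [hp, hp.trans hp₁]
  have hpos : 0 < ‖u‖ := norm_pos_iff.2 hu
  rw [setLIntegral_indicator measurableSet_Ici, Set.inter_eq_left.2 (Set.Ici_subset_Ioi.2 hpos),
    lintegral_mul_const _ (by fun_prop), lintegral_Ici_rpow (by linarith) hpos,
    ← ofReal_norm, ENNReal.ofReal_rpow_of_pos hpos, ENNReal.ofReal_rpow_of_pos hpos,
    ← ENNReal.ofReal_inv_of_pos (by linarith), ← ENNReal.ofReal_mul' (by positivity),
    ← ENNReal.ofReal_mul' (by positivity), sub_add_cancel, Real.rpow_sub hpos]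
  congr 1
  have : p - p₁ ≠ 0 := by linarith
  have : p₁ - p ≠ 0 := by linarith
  field_simp
  ring

lemma lintegral_Ioi_rpow_mul_setLIntegral_norm_le [SFinite μ] (hp : 0 < p) (hp₁ : p < p₁)
    {g : X → F} (hg : AEStronglyMeasurable g μ) :
    ∫⁻ t in Set.Ioi (0 : ℝ),
        ENNReal.ofReal (t ^ (p - p₁ - 1)) * ∫⁻ x in {x | ‖g x‖ ≤ t}, ‖g x‖ₑ ^ p₁ ∂μ =
      (ENNReal.ofReal (p₁ - p))⁻¹ * ∫⁻ x, ‖g x‖ₑ ^ p ∂μ := by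
  let G : ℝ → X → ℝ≥0∞ := fun t x ↦
    {z : ℝ × X | ‖g z.2‖ ≤ z.1}.indicator
      (fun z ↦ ENNReal.ofReal (z.1 ^ (p - p₁ - 1)) * ‖g z.2‖ₑ ^ p₁) (t, x)
  have hlevel (t : ℝ) : NullMeasurableSet {x | ‖g x‖ ≤ t} μ :=
    nullMeasurableSet_le hg.norm.aemeasurable aemeasurable_const
  have hG : AEMeasurable (Function.uncurry G) ((volume.restrict (Set.Ioi 0)).prod μ) := by
    refine AEMeasurable.indicator₀ ?_
      (nullMeasurableSet_le hg.norm.aemeasurable.comp_snd measurable_fst.aemeasurable)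
    exact (by fun_prop : Measurable fun z : ℝ × X ↦
      ENNReal.ofReal (z.1 ^ (p - p₁ - 1))).aemeasurable.mul (hg.enorm.pow_const p₁).comp_snd
  have hinner (x : X) : ∫⁻ t in Set.Ioi (0 : ℝ), G t x =
      (ENNReal.ofReal (p₁ - p))⁻¹ * ‖g x‖ₑ ^ p := by
    rw [← lintegral_Ioi_indicator_Ici_rpow_mul hp hp₁ (g x)]
    simp [G, Set.indicator_apply]
  calc
    _ = ∫⁻ t in Set.Ioi (0 : ℝ), ∫⁻ x, G t x ∂μ := lintegral_congr fun t ↦ by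
      rw [← lintegral_const_mul' _ _ ENNReal.ofReal_ne_top, ← lintegral_indicator₀ (hlevel t)]
      rfl
    _ = ∫⁻ x, (ENNReal.ofReal (p₁ - p))⁻¹ * ‖g x‖ₑ ^ p ∂μ := by
      rw [lintegral_lintegral_swap hG]
      exact lintegral_congr hinner
    _ = _ := lintegral_const_mul'' _ (hg.enorm.pow_const p)

lemma HasWeakType.measure_half_lt_indicator_mul_rpow_le {T : (X → F) → Y → ℝ}
    {D : Set (X → F)} {A : ℝ≥0∞} (hT : HasWeakType T D p₀ μ ν A) (hp₀ : 0 < p₀)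
    {g : X → F} {s : Set X} (hs : NullMeasurableSet s μ) (hg : s.indicator g ∈ D)
    {t : ℝ} (ht : 0 < t) :
    ν {y | t / 2 < T (s.indicator g) y} * ENNReal.ofReal (t ^ (p - 1)) ≤
      A * ENNReal.ofReal (2 ^ p₀) *
        (ENNReal.ofReal (t ^ (p - p₀ - 1)) * ∫⁻ x in s, ‖g x‖ₑ ^ p₀ ∂μ) := by
  have hmass : ∫⁻ x, ‖s.indicator g x‖ₑ ^ p₀ ∂μ = ∫⁻ x in s, ‖g x‖ₑ ^ p₀ ∂μ := by
    rw [← lintegral_indicator₀ hs]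
    refine lintegral_congr fun x ↦ ?_
    by_cases hx : x ∈ s <;> simp [hx, hp₀]
  have hpow : (t / 2) ^ (-p₀) * t ^ (p - 1) = 2 ^ p₀ * t ^ (p - p₀ - 1) := by
    rw [Real.div_rpow ht.le zero_le_two, Real.rpow_neg zero_le_two, div_inv_eq_mul,
      show p - p₀ - 1 = -p₀ + (p - 1) by ring, Real.rpow_add ht]
    ring
  calc
    _ ≤ A * (ENNReal.ofReal ((t / 2) ^ (-p₀)) * ∫⁻ x in s, ‖g x‖ₑ ^ p₀ ∂μ) *
          ENNReal.ofReal (t ^ (p - 1)) := by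
      gcongr
      exact hmass ▸ hT _ hg _ (half_pos ht)
    _ = A * ENNReal.ofReal ((t / 2) ^ (-p₀) * t ^ (p - 1)) * ∫⁻ x in s, ‖g x‖ₑ ^ p₀ ∂μ := by
      rw [ENNReal.ofReal_mul (by positivity)]
      ring
    _ = _ := by
      rw [hpow, ENNReal.ofReal_mul (by positivity)]
      ring

lemma measure_lt_add_le {T : (X → F) → Y → ℝ} {g h : X → F}
    (hT : ∀ y, T (g + h) y ≤ T g y + T h y) (t : ℝ) :
    ν {y | t < T (g + h) y} ≤ ν {y | t / 2 < T g y} + ν {y | t / 2 < T h y} := by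
  refine (measure_mono fun y (hy : t < _) ↦ ?_).trans (measure_union_le _ _)
  by_contra hcon
  simp only [Set.mem_union, Set.mem_ofPred_eq, not_or, not_lt] at hcon
  linarith [hT y, hcon.1, hcon.2]

lemma HasWeakType.measure_lt_mul_rpow_le {T : (X → F) → Y → ℝ} {D : Set (X → F)} {A₀ A₁ : ℝ≥0∞}
    (h₀ : HasWeakType T D p₀ μ ν A₀) (h₁ : HasWeakType T D p₁ μ ν A₁) (hp₀ : 0 < p₀) (hp₁ : 0 < p₁)
    (hD : ∀ g ∈ D, ∀ s, NullMeasurableSet s μ → s.indicator g ∈ D)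
    (hT : ∀ g ∈ D, ∀ h ∈ D, ∀ y, T (g + h) y ≤ T g y + T h y)
    {g : X → F} (hgD : g ∈ D) (hg : AEStronglyMeasurable g μ) {t : ℝ} (ht : 0 < t) :
    ν {y | t < T g y} * ENNReal.ofReal (t ^ (p - 1)) ≤
      A₀ * ENNReal.ofReal (2 ^ p₀) *
          (ENNReal.ofReal (t ^ (p - p₀ - 1)) * ∫⁻ x in {x | t < ‖g x‖}, ‖g x‖ₑ ^ p₀ ∂μ) +
        A₁ * ENNReal.ofReal (2 ^ p₁) *
          (ENNReal.ofReal (t ^ (p - p₁ - 1)) * ∫⁻ x in {x | ‖g x‖ ≤ t}, ‖g x‖ₑ ^ p₁ ∂μ) := by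
  have hcompl : {x | ‖g x‖ ≤ t} = {x | t < ‖g x‖}ᶜ := by ext; simp
  have habove : NullMeasurableSet {x | t < ‖g x‖} μ :=
    nullMeasurableSet_lt aemeasurable_const hg.norm.aemeasurable
  have hu := hD g hgD _ habove
  have hv := hD g hgD _ habove.compl
  rw [hcompl]
  refine le_trans ?_ (add_le_add
    (h₀.measure_half_lt_indicator_mul_rpow_le hp₀ habove hu ht)
    (h₁.measure_half_lt_indicator_mul_rpow_le hp₁ habove.compl hv ht))
  rw [← add_mul]
  gcongr
  simpa only [Set.indicator_self_add_compl] using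
    measure_lt_add_le (ν := ν) (hT _ hu _ hv) t

theorem HasWeakType.lintegral_rpow_le [SFinite μ] {T : (X → F) → Y → ℝ} {D : Set (X → F)}
    {A₀ A₁ : ℝ≥0∞} (h₀ : HasWeakType T D p₀ μ ν A₀) (h₁ : HasWeakType T D p₁ μ ν A₁)
    (hp₀ : 0 < p₀) (hp : p₀ < p) (hp₁ : p < p₁)
    (hD : ∀ g ∈ D, ∀ s, NullMeasurableSet s μ → s.indicator g ∈ D)
    (hT : ∀ g ∈ D, ∀ h ∈ D, ∀ y, T (g + h) y ≤ T g y + T h y)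
    {g : X → F} (hgD : g ∈ D) (hg : AEStronglyMeasurable g μ) (hTg : AEMeasurable (T g) ν)
    (hnonneg : 0 ≤ T g) :
    ∫⁻ y, ENNReal.ofReal (T g y ^ p) ∂ν ≤
      ENNReal.ofReal p * (A₀ * ENNReal.ofReal (2 ^ p₀) * (ENNReal.ofReal (p - p₀))⁻¹ +
        A₁ * ENNReal.ofReal (2 ^ p₁) * (ENNReal.ofReal (p₁ - p))⁻¹) * ∫⁻ x, ‖g x‖ₑ ^ p ∂μ := by
  have habove : Measurable fun t ↦ ∫⁻ x in {x | t < ‖g x‖}, ‖g x‖ₑ ^ p₀ ∂μ :=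
    Antitone.measurable fun s t hst ↦ lintegral_mono_set fun x (hx : t < _) ↦ hst.trans_lt hx
  have hbelow : Measurable fun t ↦ ∫⁻ x in {x | ‖g x‖ ≤ t}, ‖g x‖ₑ ^ p₁ ∂μ :=
    Monotone.measurable fun s t hst ↦ lintegral_mono_set fun x (hx : _ ≤ s) ↦ hx.trans hst
  rw [lintegral_rpow_eq_lintegral_meas_lt_mul ν (.of_forall hnonneg) hTg
    (hp₀.trans hp), mul_assoc]
  gcongr
  refine (setLIntegral_mono' measurableSet_Ioi fun t ht ↦ h₀.measure_lt_mul_rpow_le h₁ hp₀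
    (hp₀.trans (hp.trans hp₁)) hD hT hgD hg ht).trans_eq ?_
  rw [lintegral_add_left (by fun_prop), lintegral_const_mul _ (by fun_prop),
    lintegral_const_mul _ (by fun_prop),
    lintegral_Ioi_rpow_mul_setLIntegral_lt_norm hp₀.le hp hg,
    lintegral_Ioi_rpow_mul_setLIntegral_norm_le (hp₀.trans hp) hp₁ hg]
  ring

end MarcinkiewiczInterpolation

section FourierWeakType

variable {V F : Type*} [NormedAddCommGroup V] [InnerProductSpace ℝ V] [FiniteDimensional ℝ V]
  [MeasurableSpace V] [BorelSpace V] [NormedAddCommGroup F] [NormedSpace ℂ F]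
  {g : V → F} {w : V → ℝ}

lemma enorm_fourier_le_lintegral (g : V → F) (ξ : V) : ‖𝓕 g ξ‖ₑ ≤ ∫⁻ x, ‖g x‖ₑ :=
  (enorm_integral_le_lintegral_enorm _).trans_eq <| lintegral_congr fun x ↦ by
    rw [Circle.smul_def, enorm_smul, ← ofReal_norm, Circle.norm_coe, ENNReal.ofReal_one, one_mul]

lemma continuous_fourier_of_integrable (hg : Integrable g) : Continuous (𝓕 g) :=
  VectorFourier.fourierIntegral_continuous Real.continuous_fourierChar continuous_inner hg

lemma fourier_add_of_integrable {h : V → F} (hg : Integrable g) (hh : Integrable h) :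
    𝓕 (g + h) = 𝓕 g + 𝓕 h :=
  VectorFourier.fourierIntegral_add Real.continuous_fourierChar continuous_inner hg hh

lemma measurable_norm_fourier_div (hw : Measurable w) (hg : Integrable g) :
    Measurable fun ξ ↦ ‖𝓕 g ξ‖ / w ξ :=
  (continuous_fourier_of_integrable hg).norm.measurable.div hw

/-- The measure `w² dξ`, with respect to which `g ↦ ‖𝓕 g‖ / w` is of weak type `(1, 1)` and
`(2, 2)`. -/
def paleyMeasure (w : V → ℝ) : Measure V :=
  volume.withDensity fun ξ ↦ ENNReal.ofReal (w ξ ^ 2)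

lemma hasWeakType_one_fourier_div (hw0 : 0 ≤ w) {A : ℝ≥0∞}
    (hA : ∀ s : ℝ, 0 < s → paleyMeasure w {ξ | w ξ < s} ≤ A * ENNReal.ofReal s) :
    HasWeakType (fun (g : V → F) ξ ↦ ‖𝓕 g ξ‖ / w ξ) {g | Integrable g ∧ MemLp g 2} 1
      volume (paleyMeasure w) A := by
  rintro g ⟨hg, -⟩ t ht
  have hmem {ξ : V} (hξ : t < ‖𝓕 g ξ‖ / w ξ) : w ξ < t⁻¹ * ∫ x, ‖g x‖ := by
    have hwξ : 0 < w ξ := (hw0 ξ).lt_of_ne' fun h ↦ by simp [h, ht.not_gt] at hξ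
    have hle : ‖𝓕 g ξ‖ ≤ ∫ x, ‖g x‖ := by
      have h := enorm_fourier_le_lintegral g ξ
      rwa [← ofReal_integral_norm_eq_lintegral_enorm hg, ← ofReal_norm,
        ENNReal.ofReal_le_ofReal_iff (by positivity)] at h
    rw [lt_div_iff₀ hwξ] at hξ
    rw [lt_inv_mul_iff₀ ht]
    exact hξ.trans_le hle
  simp only [ENNReal.rpow_one, Real.rpow_neg_one]
  rw [← ofReal_integral_norm_eq_lintegral_enorm hg, ← ENNReal.ofReal_mul (inv_nonneg.2 ht.le)]
  rcases (by positivity : 0 ≤ t⁻¹ * ∫ x, ‖g x‖).eq_or_lt with h0 | hpos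
  · have hempty : {ξ | t < ‖𝓕 g ξ‖ / w ξ} = ∅ :=
      Set.eq_empty_of_forall_notMem fun ξ hξ ↦ ((hmem hξ).trans_eq h0.symm).not_ge (hw0 ξ)
    simp [hempty]
  · exact (measure_mono fun ξ hξ ↦ hmem hξ).trans (hA _ hpos)

end FourierWeakType

section Paley

variable {V F : Type*} [NormedAddCommGroup V] [InnerProductSpace ℝ V] [FiniteDimensional ℝ V]
  [MeasurableSpace V] [BorelSpace V] [NormedAddCommGroup F] [InnerProductSpace ℂ F]
  [CompleteSpace F] {g : V → F} {w : V → ℝ} {p : ℝ}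

lemma coeFn_fourier_toLp_ae_eq (h1 : Integrable g) (h2 : MemLp g 2) :
    (𝓕 (h2.toLp g) : Lp F 2 (volume : Measure V)) =ᵐ[volume] 𝓕 g := by
  refine ae_eq_of_integral_contDiff_smul_eq ((Lp.memLp _).locallyIntegrable one_le_two)
    (continuous_fourier_of_integrable h1).locallyIntegrable fun φ hφ hφc ↦ ?_
  have hφ' : ContDiff ℝ ∞ (Complex.ofRealCLM ∘ φ) := by fun_prop
  have hφc' : HasCompactSupport (Complex.ofRealCLM ∘ φ) := hφc.comp_left rfl
  let Φ : 𝓢(V, ℂ) := hφc'.toSchwartzMap hφ'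
  have hcoe (u : F) (x : V) : Φ x • u = φ x • u := Complex.coe_smul (φ x) u
  have hdist : ∫ ξ, Φ ξ • (𝓕 (h2.toLp g) : Lp F 2 (volume : Measure V)) ξ =
      ∫ x, 𝓕 Φ x • h2.toLp g x := by
    simpa only [TemperedDistribution.fourier_apply, Lp.toTemperedDistribution_apply] using
      (congrArg (fun T : 𝓢'(V, F) ↦ T Φ) (Lp.fourier_toTemperedDistribution_eq (h2.toLp g))).symm
  have hflip : ∫ x, 𝓕 (Φ : V → ℂ) x • g x = ∫ ξ, Φ ξ • 𝓕 g ξ := by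
    simpa using! VectorFourier.integral_fourierIntegral_smul_eq_flip (L := innerₗ V)
      Real.continuous_fourierChar continuous_inner Φ.integrable h1
  simp only [← hcoe]
  rw [hdist, ← hflip]
  refine integral_congr_ae ?_
  filter_upwards [h2.coeFn_toLp] with x hx
  rw [hx, SchwartzMap.fourier_coe]

theorem eLpNorm_fourier_two (h1 : Integrable g) (h2 : MemLp g 2) :
    eLpNorm (𝓕 g) 2 = eLpNorm g 2 := by
  rw [← eLpNorm_congr_ae (coeFn_fourier_toLp_ae_eq h1 h2), ← eLpNorm_congr_ae h2.coeFn_toLp,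
    ← Lp.enorm_def, ← Lp.enorm_def, enorm_eq_iff_norm_eq, Lp.norm_fourier_eq]

lemma lintegral_enorm_fourier_sq (h1 : Integrable g) (h2 : MemLp g 2) :
    ∫⁻ ξ, ‖𝓕 g ξ‖ₑ ^ (2 : ℝ) = ∫⁻ x, ‖g x‖ₑ ^ (2 : ℝ) := by
  have h := eLpNorm_fourier_two h1 h2
  simp only [eLpNorm_eq_lintegral_rpow_enorm_toReal two_ne_zero ENNReal.ofNat_ne_top,
    ENNReal.toReal_ofNat] at h
  exact ENNReal.rpow_left_injective (by norm_num : 1 / (2 : ℝ) ≠ 0) h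

lemma lintegral_fourier_div_sq_le (hw : Measurable w) (hg : Integrable g) (hg2 : MemLp g 2) :
    ∫⁻ ξ, ENNReal.ofReal ((‖𝓕 g ξ‖ / w ξ) ^ (2 : ℝ)) ∂paleyMeasure w ≤
      ∫⁻ x, ‖g x‖ₑ ^ (2 : ℝ) := by
  have hT := measurable_norm_fourier_div hw hg
  rw [paleyMeasure, lintegral_withDensity_eq_lintegral_mul _ (by fun_prop) (by fun_prop),
    ← lintegral_enorm_fourier_sq hg hg2]
  refine lintegral_mono fun ξ ↦ ?_
  rw [Pi.mul_apply, ← ENNReal.ofReal_mul (sq_nonneg _), ← ofReal_norm,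
    ENNReal.ofReal_rpow_of_nonneg (norm_nonneg _) zero_le_two]
  refine ENNReal.ofReal_le_ofReal ?_
  rw [Real.rpow_two, Real.rpow_two, div_pow, mul_div_left_comm]
  exact mul_le_of_le_one_right (sq_nonneg _) (div_self_le_one _)

lemma hasWeakType_two_fourier_div (hw : Measurable w) :
    HasWeakType (fun (g : V → F) ξ ↦ ‖𝓕 g ξ‖ / w ξ) {g | Integrable g ∧ MemLp g 2} 2
      volume (paleyMeasure w) 1 := by
  rintro g ⟨hg, hg2⟩ t ht
  have hT := measurable_norm_fourier_div hw hg
  have hmeas : Measurable fun ξ ↦ ENNReal.ofReal ((‖𝓕 g ξ‖ / w ξ) ^ (2 : ℝ)) := by fun_prop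
  have hcheb := mul_meas_ge_le_lintegral (μ := paleyMeasure w) hmeas (ENNReal.ofReal (t ^ (2 : ℝ)))
  rw [one_mul, Real.rpow_neg ht.le, ENNReal.ofReal_inv_of_pos (by positivity), mul_comm,
    ← div_eq_mul_inv, ENNReal.le_div_iff_mul_le (by left; positivity) (by simp), mul_comm]
  refine le_trans ?_ (hcheb.trans (lintegral_fourier_div_sq_le hw hg hg2))
  gcongr with ξ
  exact fun hξ ↦ ENNReal.ofReal_le_ofReal (Real.rpow_le_rpow ht.le hξ.le zero_le_two)

theorem exists_lintegral_fourier_div_rpow_le (hw : Measurable w) (hw0 : 0 ≤ w) {A : ℝ≥0∞}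
    (hA : ∀ s : ℝ, 0 < s → paleyMeasure w {ξ | w ξ < s} ≤ A * ENNReal.ofReal s) (hAtop : A ≠ ⊤)
    (hp1 : 1 < p) (hp2 : p ≤ 2) :
    ∃ K : ℝ≥0∞, K ≠ ⊤ ∧ ∀ g : V → F, Integrable g → MemLp g 2 →
      ∫⁻ ξ, ENNReal.ofReal ((‖𝓕 g ξ‖ / w ξ) ^ p) ∂paleyMeasure w ≤ K * ∫⁻ x, ‖g x‖ₑ ^ p := by
  rcases hp2.eq_or_lt with rfl | hp2
  · exact ⟨1, ENNReal.one_ne_top, fun g hg hg2 ↦ by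
      simpa using lintegral_fourier_div_sq_le hw hg hg2⟩
  refine ⟨_, ?_, fun g hg hg2 ↦ (hasWeakType_one_fourier_div hw0 hA).lintegral_rpow_le
    (hasWeakType_two_fourier_div hw) one_pos hp1 hp2 ?_ ?_ ⟨hg, hg2⟩ hg.aestronglyMeasurable
    ?_ fun ξ ↦ div_nonneg (norm_nonneg _) (hw0 ξ)⟩
  · have h1 : (ENNReal.ofReal (p - 1))⁻¹ ≠ ⊤ := by simpa using hp1
    have h2 : (ENNReal.ofReal (2 - p))⁻¹ ≠ ⊤ := by simpa using hp2
    finiteness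
  · exact fun g hg s hs ↦ ⟨hg.1.indicator₀ hs, hg.2.1.indicator₀ hs,
      (eLpNorm_indicator_le g).trans_lt hg.2.2⟩
  · intro g hg h hh ξ
    rw [fourier_add_of_integrable hg.1 hh.1, Pi.add_apply, ← add_div]
    exact div_le_div_of_nonneg_right (norm_add_le _ _) (hw0 ξ)
  · exact (measurable_norm_fourier_div hw hg).aemeasurable

end Paley

section HardyLittlewoodPaley

variable {V F : Type*} [NormedAddCommGroup V] [InnerProductSpace ℝ V]

local notation "dim" => Module.finrank ℝ

/-- The weight `‖ξ‖⁻ⁿ`, `n = dim V`, which turns Paley's inequality into the inequality of Hardy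
and Littlewood. -/
def invNormPow (ξ : V) : ℝ := (‖ξ‖ ^ dim V)⁻¹

lemma invNormPow_nonneg : 0 ≤ (invNormPow : V → ℝ) := fun _ ↦ inv_nonneg.2 (by positivity)

lemma invNormPow_smul {c : ℝ} (hc : 0 < c) (ξ : V) :
    invNormPow (c • ξ) = (c ^ dim V)⁻¹ * invNormPow ξ := by
  rw [invNormPow, norm_smul, Real.norm_of_nonneg hc.le, mul_pow, mul_inv, invNormPow]

lemma invNormPow_sq_le [Nontrivial V] [FiniteDimensional ℝ V] {ξ : V} (hξ : invNormPow ξ < 1) :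
    invNormPow ξ ^ 2 ≤ 2 ^ (2 * dim V) * (1 + ‖ξ‖) ^ (-(2 * dim V : ℝ)) := by
  have hn : dim V ≠ 0 := Module.finrank_pos.ne'
  rcases eq_or_ne ξ 0 with rfl | h0
  · simp [invNormPow, hn]
  have hpos : 0 < ‖ξ‖ := norm_pos_iff.2 h0
  have hlarge : 1 < ‖ξ‖ := by
    rw [invNormPow, inv_lt_one₀ (by positivity)] at hξ
    exact (one_lt_pow_iff_of_nonneg hpos.le hn).1 hξ
  rw [Real.rpow_neg (by positivity), ← div_eq_mul_inv, le_div_iff₀ (by positivity), invNormPow,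
    inv_pow, ← pow_mul', inv_mul_le_iff₀ (by positivity), ← mul_pow,
    ← Nat.cast_ofNat, ← Nat.cast_mul, Real.rpow_natCast]
  gcongr
  push_cast
  linarith

variable [MeasurableSpace V] [BorelSpace V]

lemma measurable_invNormPow : Measurable (invNormPow : V → ℝ) :=
  (measurable_norm.pow_const _).inv

variable [FiniteDimensional ℝ V]

lemma lintegral_comp_smul (f : V → ℝ≥0∞) {c : ℝ} (hc : 0 < c) :
    ∫⁻ x, f (c • x) = ENNReal.ofReal (c ^ dim V)⁻¹ * ∫⁻ x, f x := by
  have h : MeasurableEmbedding (fun x : V ↦ c • x) :=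
    (Homeomorph.smulOfNeZero c hc.ne').measurableEmbedding
  rw [← h.lintegral_map, Measure.map_addHaar_smul _ hc.ne', lintegral_smul_measure,
    abs_of_pos (by positivity), smul_eq_mul]

variable [Nontrivial V]

lemma paleyMeasure_invNormPow_lt {s : ℝ} (hs : 0 < s) :
    paleyMeasure invNormPow {ξ : V | invNormPow ξ < s} =
      paleyMeasure invNormPow {ξ : V | invNormPow ξ < 1} * ENNReal.ofReal s := by
  let W (t : ℝ) (ξ : V) : ℝ≥0∞ :=
    {ξ : V | invNormPow ξ < t}.indicator (fun ξ ↦ ENNReal.ofReal (invNormPow ξ ^ 2)) ξ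
  have hW (t : ℝ) : paleyMeasure invNormPow {ξ : V | invNormPow ξ < t} = ∫⁻ ξ, W t ξ := by
    have hmeas := measurableSet_lt (measurable_invNormPow (V := V)) (measurable_const (a := t))
    rw [paleyMeasure, withDensity_apply _ hmeas, ← lintegral_indicator hmeas]
  obtain ⟨c, hc, hcs⟩ : ∃ c : ℝ, 0 < c ∧ c ^ dim V = s :=
    ⟨s ^ (dim V : ℝ)⁻¹, by positivity, Real.rpow_inv_natCast_pow hs.le Module.finrank_pos.ne'⟩
  have hscale (ξ : V) : W s ξ = ENNReal.ofReal (s ^ 2) * W 1 (c • ξ) := by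
    simp only [W, Set.indicator_apply, Set.mem_ofPred_eq, invNormPow_smul hc, hcs,
      inv_mul_lt_iff₀ hs, mul_one]
    split_ifs
    · rw [← ENNReal.ofReal_mul (by positivity)]
      congr 1
      field_simp
    · rw [mul_zero]
  rw [hW, hW, lintegral_congr hscale, lintegral_const_mul' _ _ ENNReal.ofReal_ne_top,
    lintegral_comp_smul _ hc, hcs, ← mul_assoc, ← ENNReal.ofReal_mul (by positivity), mul_comm]
  congr 2
  field_simp

lemma paleyMeasure_invNormPow_lt_one_ne_top :
    paleyMeasure invNormPow {ξ : V | invNormPow ξ < 1} ≠ ⊤ := by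
  have hmeas := measurableSet_lt (measurable_invNormPow (V := V)) (measurable_const (a := 1))
  have hfin : ∫⁻ ξ : V, ENNReal.ofReal ((1 + ‖ξ‖) ^ (-(2 * dim V : ℝ))) < ⊤ :=
    finite_integral_one_add_norm (by
      have : (0 : ℝ) < dim V := Nat.cast_pos.2 Module.finrank_pos
      linarith)
  rw [paleyMeasure, withDensity_apply _ hmeas]
  refine ne_top_of_le_ne_top
    (ENNReal.mul_ne_top (ENNReal.ofReal_ne_top (r := 2 ^ (2 * dim V))) hfin.ne)
    ((setLIntegral_mono' hmeas fun ξ hξ ↦ ?_).trans (setLIntegral_le_lintegral _ _) |>.trans_eq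
      (lintegral_const_mul' _ _ ENNReal.ofReal_ne_top))
  rw [← ENNReal.ofReal_mul (by positivity)]
  exact ENNReal.ofReal_le_ofReal (invNormPow_sq_le hξ)

variable [NormedAddCommGroup F] [InnerProductSpace ℂ F] [CompleteSpace F]

theorem exists_lintegral_norm_rpow_mul_fourier_le {p : ℝ} (hp1 : 1 < p) (hp2 : p ≤ 2) :
    ∃ K : ℝ≥0∞, K ≠ ⊤ ∧ ∀ g : V → F, Integrable g → MemLp g 2 →
      ∫⁻ ξ, ENNReal.ofReal (‖ξ‖ ^ (dim V * (p - 2)) * ‖𝓕 g ξ‖ ^ p) ≤ K * ∫⁻ x, ‖g x‖ₑ ^ p := by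
  have hw : Measurable (invNormPow : V → ℝ) := measurable_invNormPow
  obtain ⟨K, hK, h⟩ := exists_lintegral_fourier_div_rpow_le (F := F) hw invNormPow_nonneg
    (fun s hs ↦ (paleyMeasure_invNormPow_lt hs).le) paleyMeasure_invNormPow_lt_one_ne_top hp1 hp2
  refine ⟨K, hK, fun g hg hg2 ↦ le_of_eq_of_le ?_ (h g hg hg2)⟩
  have hT := measurable_norm_fourier_div hw hg
  rw [paleyMeasure, lintegral_withDensity_eq_lintegral_mul _ (by fun_prop) (by fun_prop)]
  refine lintegral_congr_ae ?_
  filter_upwards [compl_mem_ae_iff.2 (measure_singleton (0 : V))] with ξ hξ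
  have hpos : 0 < ‖ξ‖ := norm_pos_iff.2 hξ
  rw [Pi.mul_apply, ← ENNReal.ofReal_mul (by positivity), invNormPow, div_inv_eq_mul,
    Real.mul_rpow (norm_nonneg _) (by positivity), mul_sub, Real.rpow_sub hpos,
    Real.rpow_mul hpos.le, Real.rpow_natCast, Real.rpow_mul hpos.le, Real.rpow_natCast,
    Real.rpow_two]
  congr 1
  field_simp

end HardyLittlewoodPaley

section SchwartzOperators

variable {d : ℕ}

/-- The dilation `f ↦ f (c ·)` of Schwartz functions. -/
def schwartzDilation (c : ℝ) (hc : c ≠ 0) : 𝓢(E d, ℂ) ≃L[ℝ] 𝓢(E d, ℂ) :=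
  ContinuousLinearEquiv.equivOfInverse
    (SchwartzMap.compCLMOfContinuousLinearEquiv ℝ
      (ContinuousLinearEquiv.smulLeft (Units.mk0 c hc)))
    (SchwartzMap.compCLMOfContinuousLinearEquiv ℝ
      (ContinuousLinearEquiv.smulLeft (Units.mk0 c hc)⁻¹))
    (fun f ↦ by ext x; simp [ContinuousLinearEquiv.smulLeft, Units.smul_def, hc])
    (fun f ↦ by ext x; simp [ContinuousLinearEquiv.smulLeft, Units.smul_def, hc])

@[simp]
lemma schwartzDilation_apply (c : ℝ) (hc : c ≠ 0) (f : 𝓢(E d, ℂ)) (x : E d) :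
    schwartzDilation c hc f x = f (c • x) := rfl

/-- The Fourier transform `FT` as an automorphism of the Schwartz space. -/
def schwartzFT : 𝓢(E d, ℂ) ≃L[ℝ] 𝓢(E d, ℂ) :=
  (FourierTransform.fourierCLE ℝ _).trans (schwartzDilation (2 * π)⁻¹ (by positivity))

lemma FT_eq_vectorFourierIntegral (u : E d → ℂ) :
    FT d u = VectorFourier.fourierIntegral 𝐞 volume ((2 * π)⁻¹ • innerₗ (E d)) u := by
  ext ξ
  refine integral_congr_ae (.of_forall fun x ↦ ?_)
  simp only [LinearMap.smul_apply, innerₗ_apply_apply, smul_eq_mul, Circle.smul_def,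
    Real.fourierChar_apply]
  congr 2
  push_cast
  field_simp

lemma FT_eq_fourier (u : E d → ℂ) (ξ : E d) : FT d u ξ = 𝓕 u ((2 * π)⁻¹ • ξ) := by
  rw [FT_eq_vectorFourierIntegral]
  simp [VectorFourier.fourierIntegral, Real.fourier_eq, real_inner_smul_right]

lemma schwartzFT_apply (f : 𝓢(E d, ℂ)) (ξ : E d) : schwartzFT f ξ = FT d f ξ :=
  (FT_eq_fourier f ξ).symm

lemma integral_schwartzFT_mul (f g : 𝓢(E d, ℂ)) :
    ∫ x, schwartzFT f x * g x = ∫ x, f x * schwartzFT g x := by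
  have hflip : ((2 * π)⁻¹ • innerₗ (E d)).flip = (2 * π)⁻¹ • innerₗ (E d) := by
    ext x y
    simp [real_inner_comm]
  simp only [schwartzFT_apply, FT_eq_vectorFourierIntegral]
  simpa only [hflip, smul_eq_mul] using! VectorFourier.integral_fourierIntegral_smul_eq_flip
    (L := (2 * π)⁻¹ • innerₗ (E d)) Real.continuous_fourierChar
    (continuous_inner.const_smul (2 * π)⁻¹) (f.integrable (μ := volume))
    (g.integrable (μ := volume))

lemma schwartzFT_schwartzDilation (c : ℝ) (hc : c ≠ 0) (f : 𝓢(E d, ℂ)) (ξ : E d) :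
    schwartzFT (schwartzDilation c hc f) ξ = |c ^ d|⁻¹ • schwartzFT f (c⁻¹ • ξ) := by
  have h := Measure.integral_comp_smul (volume : Measure (E d))
    (fun x ↦ Complex.exp (-Complex.I * (⟪x, c⁻¹ • ξ⟫ : ℂ)) * f x) c
  rw [finrank_euclideanSpace_fin] at h
  rw [schwartzFT_apply, schwartzFT_apply, FT, FT, ← abs_inv, ← h]
  simp [real_inner_smul_left, real_inner_smul_right, hc]

lemma schwartzFT_symm_apply (f : 𝓢(E d, ℂ)) (x : E d) :
    schwartzFT.symm f x = ((2 * π) ^ d)⁻¹ • schwartzFT f (-x) := by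
  have hsymm : schwartzFT.symm f = 𝓕⁻ (schwartzDilation (2 * π) (by positivity) f) := by
    rw [schwartzFT.symm_apply_eq]
    ext ξ
    rw [schwartzFT_apply, FT_eq_fourier, ← SchwartzMap.fourier_coe,
      FourierTransform.fourier_fourierInv_eq, schwartzDilation_apply,
      smul_inv_smul₀ (by positivity)]
  have hinv : schwartzFT.symm f x =
      schwartzFT (schwartzDilation (2 * π) (by positivity) f) ((2 * π) • -x) := by
    rw [schwartzFT_apply, FT_eq_fourier, inv_smul_smul₀ (by positivity), hsymm,
      SchwartzMap.fourierInv_coe, Real.fourierInv_eq_fourier_neg]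
  rw [hinv, schwartzFT_schwartzDilation, inv_smul_smul₀ (by positivity),
    abs_of_nonneg (by positivity)]

lemma schwartzFT_symm_apply_eq_integral (f : 𝓢(E d, ℂ)) (x : E d) :
    schwartzFT.symm f x =
      ((2 * π) ^ d)⁻¹ • ∫ ξ, Complex.exp (Complex.I * (⟪x, ξ⟫ : ℂ)) * f ξ := by
  rw [schwartzFT_symm_apply, schwartzFT_apply, FT]
  congr 3
  ext ξ
  rw [inner_neg_right, real_inner_comm x ξ]
  push_cast
  ring_nf

lemma schwartzFT_translate (c : E d) (f : 𝓢(E d, ℂ)) (ξ : E d) :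
    schwartzFT (f.compSubConstCLM ℝ c) ξ =
      Complex.exp (-Complex.I * (⟪c, ξ⟫ : ℂ)) * schwartzFT f ξ := by
  rw [schwartzFT_apply, schwartzFT_apply, FT, FT, ← integral_add_right_eq_self _ c,
    ← integral_const_mul]
  refine integral_congr_ae (.of_forall fun x ↦ ?_)
  simp only [SchwartzMap.compSubConstCLM_apply, add_sub_cancel_right, inner_add_left]
  rw [← mul_assoc, ← Complex.exp_add]
  push_cast
  ring_nf

lemma schwartzFT_schwartzFT (f : 𝓢(E d, ℂ)) :
    schwartzFT (schwartzFT f) = ((2 * π) ^ d : ℝ) • schwartzDilation (-1) (by norm_num) f := by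
  ext x
  have h := schwartzFT_symm_apply (schwartzFT f) (-x)
  rw [schwartzFT.symm_apply_apply, neg_neg] at h
  rw [smul_apply, schwartzDilation_apply, neg_one_smul, h,
    smul_inv_smul₀ (by positivity)]

/-- The Fourier multiplier operator with symbol `m`. -/
def schwartzMultiplier (m : E d → ℝ) : 𝓢(E d, ℂ) →L[ℝ] 𝓢(E d, ℂ) :=
  schwartzFT.symm.toContinuousLinearMap ∘L SchwartzMap.smulLeftCLM ℂ m ∘L
    schwartzFT.toContinuousLinearMap

lemma schwartzMultiplier_apply (m : E d → ℝ) (f : 𝓢(E d, ℂ)) :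
    schwartzMultiplier m f = schwartzFT.symm (SchwartzMap.smulLeftCLM ℂ m (schwartzFT f)) := rfl

variable {m m' : E d → ℝ}

lemma schwartzFT_schwartzMultiplier_apply (hm : m.HasTemperateGrowth) (f : 𝓢(E d, ℂ)) (ξ : E d) :
    schwartzFT (schwartzMultiplier m f) ξ = m ξ • schwartzFT f ξ := by
  rw [schwartzMultiplier_apply, schwartzFT.apply_symm_apply, SchwartzMap.smulLeftCLM_apply_apply hm]

lemma schwartzMultiplier_schwartzMultiplier (hm : m.HasTemperateGrowth)
    (hm' : m'.HasTemperateGrowth) (f : 𝓢(E d, ℂ)) :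
    schwartzMultiplier m (schwartzMultiplier m' f) = schwartzMultiplier (m * m') f := by
  simp only [schwartzMultiplier_apply, schwartzFT.apply_symm_apply,
    SchwartzMap.smulLeftCLM_smulLeftCLM_apply hm hm']

lemma schwartzMultiplier_schwartzFT (hm : m.HasTemperateGrowth) (heven : ∀ x, m (-x) = m x)
    (f : 𝓢(E d, ℂ)) :
    schwartzMultiplier m (schwartzFT f) = schwartzFT (SchwartzMap.smulLeftCLM ℂ m f) := by
  rw [schwartzMultiplier_apply, schwartzFT.symm_apply_eq, schwartzFT_schwartzFT,
    schwartzFT_schwartzFT]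
  ext x
  simp [SchwartzMap.smulLeftCLM_apply_apply hm, heven]

lemma schwartzMultiplier_translate (hm : m.HasTemperateGrowth) (c : E d) (f : 𝓢(E d, ℂ)) :
    schwartzMultiplier m (f.compSubConstCLM ℝ c) =
      (schwartzMultiplier m f).compSubConstCLM ℝ c := by
  refine schwartzFT.injective (SchwartzMap.ext fun ξ ↦ ?_)
  rw [schwartzFT_schwartzMultiplier_apply hm, schwartzFT_translate, schwartzFT_translate,
    schwartzFT_schwartzMultiplier_apply hm, mul_smul_comm]

lemma schwartzMultiplier_schwartzDilation (hm : m.HasTemperateGrowth) {c : ℝ} (hc : c ≠ 0)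
    (f : 𝓢(E d, ℂ)) :
    schwartzMultiplier m (schwartzDilation c hc f) =
      schwartzDilation c hc (schwartzMultiplier (fun ξ ↦ m (c • ξ)) f) := by
  have hmc : Function.HasTemperateGrowth fun ξ : E d ↦ m (c • ξ) := by fun_prop
  refine schwartzFT.injective (SchwartzMap.ext fun ξ ↦ ?_)
  rw [schwartzFT_schwartzMultiplier_apply hm, schwartzFT_schwartzDilation,
    schwartzFT_schwartzDilation, schwartzFT_schwartzMultiplier_apply hmc, smul_inv_smul₀ hc,
    smul_comm]

/-- The function `⟨x⟩ᵏ = (1 + |x|²)^{k/2}`, the symbol of `(1-Δ)^{k/2}`. -/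
def japanesePow (k : ℝ) (x : E d) : ℝ := (1 + ‖x‖ ^ 2) ^ (k / 2)

lemma japanesePow_pos (k : ℝ) (x : E d) : 0 < japanesePow k x := by
  unfold japanesePow; positivity

lemma japanesePow_mul_apply (k l : ℝ) (x : E d) :
    japanesePow k x * japanesePow l x = japanesePow (k + l) x := by
  simp only [japanesePow]
  rw [← Real.rpow_add (by positivity), add_div]

lemma japanesePow_zero : (japanesePow 0 : E d → ℝ) = 1 := by ext; simp [japanesePow]

@[fun_prop]
lemma hasTemperateGrowth_japanesePow (k : ℝ) : (japanesePow k : E d → ℝ).HasTemperateGrowth := by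
  unfold japanesePow; fun_prop

/-- The Bessel potential `(1-Δ)^{k/2}` as an operator on the Schwartz space. -/
def schwartzBessel (k : ℝ) : 𝓢(E d, ℂ) →L[ℝ] 𝓢(E d, ℂ) := schwartzMultiplier (japanesePow k)

lemma schwartzBessel_apply (k : ℝ) (f : 𝓢(E d, ℂ)) (x : E d) :
    schwartzBessel k f x = bessel d k f x := by
  rw [schwartzBessel, schwartzMultiplier_apply, schwartzFT_symm_apply_eq_integral, bessel,
    Complex.real_smul, Complex.ofReal_inv]
  congr 2
  ext ξ
  rw [SchwartzMap.smulLeftCLM_apply_apply (by fun_prop), schwartzFT_apply, Complex.real_smul,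
    japanesePow, mul_assoc]

lemma schwartzFT_schwartzBessel_apply (k : ℝ) (f : 𝓢(E d, ℂ)) (ξ : E d) :
    schwartzFT (schwartzBessel k f) ξ = japanesePow k ξ • schwartzFT f ξ :=
  schwartzFT_schwartzMultiplier_apply (by fun_prop) f ξ

lemma schwartzBessel_schwartzBessel (k l : ℝ) (f : 𝓢(E d, ℂ)) :
    schwartzBessel k (schwartzBessel l f) = schwartzBessel (k + l) f := by
  rw [schwartzBessel, schwartzBessel, schwartzBessel,
    schwartzMultiplier_schwartzMultiplier (by fun_prop) (by fun_prop)]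
  congr 2
  exact funext (japanesePow_mul_apply k l)

lemma schwartzBessel_zero (f : 𝓢(E d, ℂ)) : schwartzBessel 0 f = f := by
  refine schwartzFT.injective (SchwartzMap.ext fun ξ ↦ ?_)
  rw [schwartzFT_schwartzBessel_apply, japanesePow_zero,
    Pi.one_apply, one_smul]

lemma schwartzBessel_schwartzFT (k : ℝ) (f : 𝓢(E d, ℂ)) :
    schwartzBessel k (schwartzFT f) =
      schwartzFT (SchwartzMap.smulLeftCLM ℂ (japanesePow k) f) :=
  schwartzMultiplier_schwartzFT (by fun_prop) (fun x ↦ by simp [japanesePow]) f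

end SchwartzOperators

section Contraction

lemma enorm_integral_rpow_le_lintegral {α F : Type*} [MeasurableSpace α] [NormedAddCommGroup F]
    [NormedSpace ℝ F] {ρ : Measure α} [IsProbabilityMeasure ρ] {r : ℝ} (hr : 1 ≤ r) {u : α → F}
    (hu : AEStronglyMeasurable u ρ) : ‖∫ y, u y ∂ρ‖ₑ ^ r ≤ ∫⁻ y, ‖u y‖ₑ ^ r ∂ρ := by
  have hr0 : 0 < r := by linarith
  have hle : ‖∫ y, u y ∂ρ‖ₑ ≤ eLpNorm' u r ρ :=
    calc ‖∫ y, u y ∂ρ‖ₑ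
      _ ≤ eLpNorm' u 1 ρ := by simpa [eLpNorm'] using enorm_integral_le_lintegral_enorm u
      _ ≤ eLpNorm' u r ρ := eLpNorm'_le_eLpNorm'_of_exponent_le one_pos hr ρ hu
  calc ‖∫ y, u y ∂ρ‖ₑ ^ r
    _ ≤ eLpNorm' u r ρ ^ r := ENNReal.rpow_le_rpow hle hr0.le
    _ = ∫⁻ y, ‖u y‖ₑ ^ r ∂ρ := by
      rw [eLpNorm', ← ENNReal.rpow_mul, one_div_mul_cancel hr0.ne', ENNReal.rpow_one]

lemma eLpNorm_integral_comp_add_le {G F : Type*} [MeasurableSpace G] [AddGroup G]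
    [MeasurableAdd₂ G] [NormedAddCommGroup F] [NormedSpace ℝ F] {μ ρ : Measure G} [SFinite μ]
    [μ.IsAddRightInvariant] [IsProbabilityMeasure ρ] {p : ℝ≥0∞} (hp1 : 1 ≤ p) (hp : p ≠ ⊤)
    {u : G → F} (hu : StronglyMeasurable u) :
    eLpNorm (fun x ↦ ∫ y, u (x + y) ∂ρ) p μ ≤ eLpNorm u p μ := by
  have hp0 : p ≠ 0 := (one_pos.trans_le hp1).ne'
  rw [eLpNorm_eq_lintegral_rpow_enorm_toReal hp0 hp, eLpNorm_eq_lintegral_rpow_enorm_toReal hp0 hp]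
  have huadd : StronglyMeasurable fun z : G × G ↦ u (z.1 + z.2) :=
    hu.comp_measurable measurable_add
  refine ENNReal.rpow_le_rpow ?_ (by positivity)
  calc ∫⁻ x, ‖∫ y, u (x + y) ∂ρ‖ₑ ^ p.toReal ∂μ
    _ ≤ ∫⁻ x, ∫⁻ y, ‖u (x + y)‖ₑ ^ p.toReal ∂ρ ∂μ := lintegral_mono fun x ↦
      enorm_integral_rpow_le_lintegral (by simpa using ENNReal.toReal_mono hp hp1)
        (huadd.comp_measurable measurable_prodMk_left).aestronglyMeasurable
    _ = ∫⁻ y, ∫⁻ x, ‖u (x + y)‖ₑ ^ p.toReal ∂μ ∂ρ :=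
      lintegral_lintegral_swap (huadd.enorm.pow_const _).aemeasurable
    _ = ∫⁻ x, ‖u x‖ₑ ^ p.toReal ∂μ := by
      simp only [lintegral_add_right_eq_self (fun x ↦ ‖u x‖ₑ ^ p.toReal), lintegral_const,
        measure_univ, mul_one]

variable {d : ℕ}

lemma schwartzMultiplier_eq_integral {m : E d → ℝ} (hm : m.HasTemperateGrowth) {ρ : Measure (E d)}
    [IsProbabilityMeasure ρ] (hρ : ∀ ξ, charFun ρ ξ = m ξ) (f : 𝓢(E d, ℂ)) (x : E d) :
    schwartzMultiplier m f x = ∫ y, f (x + y) ∂ρ := by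
  have hinv (y : E d) : f (x + y) = ((2 * π) ^ d)⁻¹ •
      ∫ ξ, Complex.exp (Complex.I * (⟪x + y, ξ⟫ : ℂ)) * schwartzFT f ξ := by
    rw [← schwartzFT_symm_apply_eq_integral, schwartzFT.symm_apply_apply]
  have hint : Integrable (fun z : E d × E d ↦
      Complex.exp (Complex.I * (⟪x + z.1, z.2⟫ : ℂ)) * schwartzFT f z.2) (ρ.prod volume) := by
    refine ((schwartzFT f).integrable.comp_snd ρ).mono ?_ (.of_forall fun z ↦ ?_)
    · have := (schwartzFT f).continuous
      exact Continuous.aestronglyMeasurable (by fun_prop)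
    · rw [norm_mul, mul_comm Complex.I, Complex.norm_exp_ofReal_mul_I, one_mul]
  simp only [hinv]
  rw [schwartzMultiplier_apply, schwartzFT_symm_apply_eq_integral, integral_smul,
    integral_integral_swap hint]
  congr 2
  ext ξ
  have hexp (y : E d) : Complex.exp (Complex.I * (⟪x + y, ξ⟫ : ℂ)) * schwartzFT f ξ =
      (Complex.exp (Complex.I * (⟪x, ξ⟫ : ℂ)) * schwartzFT f ξ) *
        Complex.exp ((⟪y, ξ⟫ : ℂ) * Complex.I) := by
    rw [inner_add_left, Complex.ofReal_add, mul_add, Complex.exp_add]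
    ring_nf
  simp only [hexp]
  rw [integral_const_mul, ← charFun_apply, hρ, SchwartzMap.smulLeftCLM_apply_apply hm,
    Complex.real_smul]
  ring

lemma eLpNorm_schwartzMultiplier_le {m : E d → ℝ} (hm : m.HasTemperateGrowth) {ρ : Measure (E d)}
    [IsProbabilityMeasure ρ] (hρ : ∀ ξ, charFun ρ ξ = m ξ) {p : ℝ≥0∞} (hp1 : 1 ≤ p) (hp : p ≠ ⊤)
    (f : 𝓢(E d, ℂ)) : eLpNorm (schwartzMultiplier m f) p ≤ eLpNorm f p := by
  rw [funext (schwartzMultiplier_eq_integral hm hρ f)]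
  exact eLpNorm_integral_comp_add_le hp1 hp f.continuous.stronglyMeasurable

lemma measurable_gammaPDF (a r : ℝ) : Measurable (ProbabilityTheory.gammaPDF a r) :=
  (ProbabilityTheory.measurable_gammaPDFReal a r).ennreal_ofReal

lemma ae_nonneg_gammaMeasure (a r : ℝ) : ∀ᵐ t ∂ProbabilityTheory.gammaMeasure a r, 0 ≤ t := by
  refine (ae_withDensity_iff (measurable_gammaPDF a r)).mpr (.of_forall fun t ht ↦ ?_)
  contrapose! ht
  exact ProbabilityTheory.gammaPDF_of_neg ht

lemma integral_gammaMeasure_exp_neg_mul {a : ℝ} (ha : 0 < a) {r : ℝ} (hr : 0 ≤ r) :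
    ∫ t, Real.exp (-(t * r)) ∂(ProbabilityTheory.gammaMeasure a 1) = (1 + r) ^ (-a) := by
  have hpdf (t : ℝ) : (ProbabilityTheory.gammaPDF a 1 t).toReal • Real.exp (-(t * r)) =
      (Set.Ici (0 : ℝ)).indicator
        (fun t ↦ (Real.Gamma a)⁻¹ * (t ^ (a - 1) * Real.exp (-((1 + r) * t)))) t := by
    rw [ProbabilityTheory.gammaPDF,
      ENNReal.toReal_ofReal (ProbabilityTheory.gammaPDFReal_nonneg ha one_pos t),
      ProbabilityTheory.gammaPDFReal, Set.indicator_apply]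
    simp only [Set.mem_Ici]
    split_ifs with ht
    · rw [smul_eq_mul, Real.one_rpow, one_div, mul_assoc, mul_assoc, ← Real.exp_add]
      ring_nf
    · exact zero_mul _
  rw [ProbabilityTheory.gammaMeasure, integral_withDensity_eq_integral_toReal_smul
    (measurable_gammaPDF a 1) (.of_forall fun t ↦ ENNReal.ofReal_lt_top)]
  simp only [hpdf]
  rw [integral_indicator measurableSet_Ici, integral_Ici_eq_integral_Ioi, integral_const_mul,
    Real.integral_rpow_mul_exp_neg_mul_Ioi ha (by linarith), mul_left_comm,
    inv_mul_cancel₀ (Real.Gamma_pos_of_pos ha).ne', mul_one, one_div, Real.inv_rpow (by linarith),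
    Real.rpow_neg (by linarith)]

/-- The law of `√(2T) Z` for `T` of law `Γ(a, 1)` and `Z` an independent standard Gaussian vector.
Its density is the kernel of `(1-Δ)^{-a}`. -/
def besselLaw (d : ℕ) (a : ℝ) : Measure (E d) :=
  ((ProbabilityTheory.gammaMeasure a 1).prod (ProbabilityTheory.stdGaussian (E d))).map
    fun z ↦ √(2 * z.1) • z.2

lemma isProbabilityMeasure_besselLaw {a : ℝ} (ha : 0 < a) :
    IsProbabilityMeasure (besselLaw d a) := by
  have := ProbabilityTheory.isProbabilityMeasure_gammaMeasure ha one_pos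
  exact Measure.isProbabilityMeasure_map (by fun_prop)

lemma charFun_besselLaw {a : ℝ} (ha : 0 < a) (ξ : E d) :
    charFun (besselLaw d a) ξ = (((1 + ‖ξ‖ ^ 2) ^ (-a) : ℝ) : ℂ) := by
  have := ProbabilityTheory.isProbabilityMeasure_gammaMeasure ha one_pos
  have hgauss (t : ℝ) (ht : 0 ≤ t) : ∫ z, cexp (⟪√(2 * t) • z, ξ⟫ * Complex.I)
      ∂(ProbabilityTheory.stdGaussian (E d)) = ((Real.exp (-(t * ‖ξ‖ ^ 2)) : ℝ) : ℂ) := by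
    have h := ProbabilityTheory.charFun_stdGaussian (√(2 * t) • ξ)
    rw [charFun_apply, norm_smul, Real.norm_of_nonneg (Real.sqrt_nonneg _)] at h
    simp only [real_inner_smul_right] at h
    simp only [real_inner_smul_left, h]
    rw [← Complex.ofReal_pow, mul_pow, Real.sq_sqrt (by positivity)]
    push_cast
    ring_nf
  have hint : Integrable (fun z : ℝ × E d ↦ cexp (⟪√(2 * z.1) • z.2, ξ⟫ * Complex.I))
      ((ProbabilityTheory.gammaMeasure a 1).prod (ProbabilityTheory.stdGaussian (E d))) :=
    .of_bound (C := 1) (by fun_prop)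
      (.of_forall fun z ↦ by rw [Complex.norm_exp_ofReal_mul_I])
  rw [charFun_apply, besselLaw, integral_map (by fun_prop) (by fun_prop), integral_prod _ hint,
    integral_congr_ae ((ae_nonneg_gammaMeasure a 1).mono hgauss), integral_complex_ofReal,
    integral_gammaMeasure_exp_neg_mul ha (by positivity)]

lemma eLpNorm_schwartzBessel_le {k : ℝ} (hk : k ≤ 0) {p : ℝ≥0∞} (hp1 : 1 ≤ p) (hp : p ≠ ⊤)
    (f : 𝓢(E d, ℂ)) : eLpNorm (schwartzBessel k f) p ≤ eLpNorm f p := by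
  rcases hk.eq_or_lt with rfl | hk
  · rw [schwartzBessel_zero]
  have ha : 0 < -(k / 2) := by linarith
  have := isProbabilityMeasure_besselLaw (d := d) ha
  refine eLpNorm_schwartzMultiplier_le (by fun_prop) (ρ := besselLaw d (-(k / 2))) (fun ξ ↦ ?_)
    hp1 hp f
  rw [charFun_besselLaw ha, neg_neg, japanesePow]

end Contraction

section Sufficiency

variable {d : ℕ}

lemma exists_lintegral_norm_rpow_mul_schwartzFT_le (hd : 1 ≤ d) {p : ℝ} (hp1 : 1 < p)
    (hp2 : p ≤ 2) :
    ∃ K : ℝ≥0∞, K ≠ ⊤ ∧ ∀ g : 𝓢(E d, ℂ),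
      ∫⁻ ξ, ENNReal.ofReal (‖ξ‖ ^ (d * (p - 2)) * ‖schwartzFT g ξ‖ ^ p) ≤
        K * ∫⁻ x, ‖g x‖ₑ ^ p := by
  have : Nonempty (Fin d) := ⟨⟨0, hd⟩⟩
  obtain ⟨K, hK, h⟩ := exists_lintegral_norm_rpow_mul_fourier_le (V := E d) (F := ℂ) hp1 hp2
  rw [finrank_euclideanSpace_fin] at h
  set a : ℝ := d * (p - 2)
  have hscale (g : 𝓢(E d, ℂ)) (ξ : E d) :
      ENNReal.ofReal (‖ξ‖ ^ a * ‖schwartzFT g ξ‖ ^ p) = ENNReal.ofReal ((2 * π) ^ a) *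
        ENNReal.ofReal (‖(2 * π)⁻¹ • ξ‖ ^ a * ‖𝓕 (g : E d → ℂ) ((2 * π)⁻¹ • ξ)‖ ^ p) := by
    rw [← ENNReal.ofReal_mul (by positivity), ← mul_assoc,
      ← Real.mul_rpow (by positivity) (by positivity), ← norm_smul_of_nonneg (by positivity),
      smul_inv_smul₀ (by positivity), schwartzFT_apply, FT_eq_fourier]
  refine ⟨ENNReal.ofReal ((2 * π) ^ a) * ENNReal.ofReal ((2 * π)⁻¹ ^ d)⁻¹ * K, by finiteness,
    fun g ↦ ?_⟩
  simp only [hscale]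
  rw [lintegral_const_mul' _ _ ENNReal.ofReal_ne_top, lintegral_comp_smul
    (fun ξ ↦ ENNReal.ofReal (‖ξ‖ ^ a * ‖𝓕 (g : E d → ℂ) ξ‖ ^ p)) (by positivity),
    finrank_euclideanSpace_fin, mul_assoc, mul_assoc]
  gcongr
  exact h g g.integrable (g.memLp 2)

lemma norm_schwartzFT_rpow_le {p : ℝ} (hp1 : 1 < p) (hp2 : p ≤ 2) {k : ℝ}
    (hk : 2 * d * (1 / p - 1 / 2) ≤ k) (f : 𝓢(E d, ℂ)) {ξ : E d} (hξ : ξ ≠ 0) :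
    ‖schwartzFT f ξ‖ ^ p ≤
      ‖ξ‖ ^ (d * (p - 2)) * ‖schwartzFT (schwartzBessel k f) ξ‖ ^ p := by
  have hw : 0 < 1 + ‖ξ‖ ^ 2 := by positivity
  have hnorm : (1 + ‖ξ‖ ^ 2) ^ (d * (p - 2) / 2) ≤ ‖ξ‖ ^ (d * (p - 2)) := by
    have ha : d * (p - 2) / 2 ≤ 0 := by
      have : (d : ℝ) * (p - 2) ≤ 0 := mul_nonpos_of_nonneg_of_nonpos d.cast_nonneg (by linarith)
      linarith
    calc (1 + ‖ξ‖ ^ 2) ^ (d * (p - 2) / 2)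
      _ ≤ (‖ξ‖ ^ 2) ^ (d * (p - 2) / 2) :=
        Real.rpow_le_rpow_of_nonpos (by positivity) (by linarith) ha
      _ = ‖ξ‖ ^ (d * (p - 2)) := by
        rw [← Real.rpow_natCast, ← Real.rpow_mul (norm_nonneg _), Nat.cast_ofNat,
          mul_div_cancel₀ _ two_ne_zero]
  have hexp : 0 ≤ d * (p - 2) / 2 + k / 2 * p := by
    have := mul_le_mul_of_nonneg_right hk (by linarith : 0 ≤ p)
    have : 2 * d * (1 / p - 1 / 2) * p = 2 * d - d * p := by field_simp
    linarith
  have hweight : 1 ≤ ‖ξ‖ ^ (d * (p - 2)) * japanesePow k ξ ^ p :=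
    calc 1 ≤ (1 + ‖ξ‖ ^ 2) ^ (d * (p - 2) / 2 + k / 2 * p) :=
          Real.one_le_rpow (by nlinarith [sq_nonneg ‖ξ‖]) hexp
      _ = (1 + ‖ξ‖ ^ 2) ^ (d * (p - 2) / 2) * japanesePow k ξ ^ p := by
          rw [Real.rpow_add hw, japanesePow, ← Real.rpow_mul hw.le]
      _ ≤ ‖ξ‖ ^ (d * (p - 2)) * japanesePow k ξ ^ p := by
          have := japanesePow_pos k ξ
          gcongr
  rw [schwartzFT_schwartzBessel_apply, norm_smul, Real.norm_of_nonneg (japanesePow_pos k ξ).le,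
    Real.mul_rpow (japanesePow_pos k ξ).le (norm_nonneg _), ← mul_assoc]
  exact le_mul_of_one_le_left (by positivity) hweight

lemma exists_eLpNorm_schwartzFT_le (hd : 1 ≤ d) {p : ℝ} (hp1 : 1 < p) (hp2 : p ≤ 2) {k : ℝ}
    (hk : 2 * d * (1 / p - 1 / 2) ≤ k) :
    ∃ K : ℝ≥0∞, K ≠ ⊤ ∧ ∀ f : 𝓢(E d, ℂ),
      eLpNorm (schwartzFT f) (ENNReal.ofReal p) ≤
        K * eLpNorm (schwartzBessel k f) (ENNReal.ofReal p) := by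
  have hp0 : 0 < p := by linarith
  have : Nonempty (Fin d) := ⟨⟨0, hd⟩⟩
  obtain ⟨K, hK, h⟩ := exists_lintegral_norm_rpow_mul_schwartzFT_le hd hp1 hp2
  refine ⟨K ^ (1 / p), ENNReal.rpow_ne_top_of_nonneg (by positivity) hK, fun f ↦ ?_⟩
  simp only [eLpNorm_eq_lintegral_rpow_enorm_toReal (ENNReal.ofReal_pos.mpr hp0).ne'
    ENNReal.ofReal_ne_top, ENNReal.toReal_ofReal hp0.le]
  rw [← ENNReal.mul_rpow_of_nonneg _ _ (by positivity)]
  refine ENNReal.rpow_le_rpow (le_trans ?_ (h (schwartzBessel k f))) (by positivity)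
  refine lintegral_mono_ae ((Measure.ae_ne volume (0 : E d)).mono fun ξ hξ ↦ ?_)
  rw [← ofReal_norm, ENNReal.ofReal_rpow_of_nonneg (norm_nonneg _) hp0.le]
  exact ENNReal.ofReal_le_ofReal (norm_schwartzFT_rpow_le hp1 hp2 hk f hξ)

/-- Boundedness of the Fourier transform from `L^p_{k₁}(ℝᵈ)` to `L^p_{k₂}(ℝᵈ)` with constant `C`,
tested on Schwartz functions. -/
def FourierBound (d : ℕ) (p : ℝ≥0∞) (k₁ k₂ C : ℝ) : Prop :=
  ∀ f : 𝓢(E d, ℂ), lpNorm (schwartzBessel k₂ (schwartzFT f)) p volume ≤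
    C * lpNorm (schwartzBessel k₁ f) p volume

theorem exists_fourierBound (hd : 1 ≤ d) {p : ℝ} (hp1 : 1 < p) (hp2 : p ≤ 2) {k₁ k₂ : ℝ}
    (hk₁ : 2 * d * (1 / p - 1 / 2) ≤ k₁) (hk₂ : k₂ ≤ 0) :
    ∃ C > 0, FourierBound d (ENNReal.ofReal p) k₁ k₂ C := by
  obtain ⟨K, hK, h⟩ := exists_eLpNorm_schwartzFT_le hd hp1 hp2 hk₁
  refine ⟨K.toReal + 1, by positivity, fun f ↦ ?_⟩
  have hle := (eLpNorm_schwartzBessel_le hk₂ (ENNReal.one_le_ofReal.mpr hp1.le)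
    ENNReal.ofReal_ne_top (schwartzFT f)).trans (h f)
  have hfin := ENNReal.mul_ne_top hK ((schwartzBessel k₁ f).memLp (ENNReal.ofReal p)).2.ne
  have hreal := ENNReal.toReal_mono hfin hle
  rw [ENNReal.toReal_mul, toReal_eLpNorm (SchwartzMap.continuous _).aestronglyMeasurable,
    toReal_eLpNorm (SchwartzMap.continuous _).aestronglyMeasurable] at hreal
  exact hreal.trans (mul_le_mul_of_nonneg_right (by linarith) lpNorm_nonneg)

end Sufficiency

section Necessity

variable {d : ℕ}

lemma norm_integral_mul_le_lpNorm_mul_lpNorm {α 𝕜 : Type*} [MeasurableSpace α] [RCLike 𝕜]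
    {μ : Measure α} {p q : ℝ≥0∞} [p.HolderConjugate q] {f g : α → 𝕜} (hf : MemLp f p μ)
    (hg : MemLp g q μ) : ‖∫ x, f x * g x ∂μ‖ ≤ lpNorm f p μ * lpNorm g q μ := by
  have hle : ‖∫ x, f x * g x ∂μ‖ₑ ≤ eLpNorm f p μ * eLpNorm g q μ :=
    calc ‖∫ x, f x * g x ∂μ‖ₑ
      _ ≤ eLpNorm (f • g) 1 μ := by
        rw [eLpNorm_one_eq_lintegral_enorm]
        exact enorm_integral_le_lintegral_enorm _
      _ ≤ eLpNorm f p μ * eLpNorm g q μ := eLpNorm_smul_le_mul_eLpNorm hg.1 hf.1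
  have hreal := ENNReal.toReal_mono (ENNReal.mul_ne_top hf.2.ne hg.2.ne) hle
  rwa [ENNReal.toReal_mul, toReal_eLpNorm hf.1, toReal_eLpNorm hg.1, toReal_enorm] at hreal

namespace FourierBound

variable {p q : ℝ≥0∞} [p.HolderConjugate q] {k₁ k₂ C : ℝ}

lemma norm_integral_mul_le (h : FourierBound d p k₁ k₂ C) (f g : 𝓢(E d, ℂ)) :
    ‖∫ x, schwartzBessel k₂ (schwartzFT f) x * g x‖ ≤
      C * lpNorm (schwartzBessel k₁ f) p volume * lpNorm g q volume :=
  (norm_integral_mul_le_lpNorm_mul_lpNorm ((schwartzBessel k₂ (schwartzFT f)).memLp p)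
    (g.memLp q)).trans (mul_le_mul_of_nonneg_right (h f) lpNorm_nonneg)

lemma norm_integral_japanesePow_right_le (h : FourierBound d p k₁ k₂ C) (f g : 𝓢(E d, ℂ)) :
    ‖∫ x, japanesePow k₂ x • (f x * g x)‖ ≤
      C * lpNorm (schwartzBessel k₁ f) p volume * lpNorm (schwartzFT.symm g) q volume := by
  convert h.norm_integral_mul_le (q := q) f (schwartzFT.symm g) using 2
  rw [schwartzBessel_schwartzFT, integral_schwartzFT_mul, schwartzFT.apply_symm_apply]
  simp only [SchwartzMap.smulLeftCLM_apply_apply (hasTemperateGrowth_japanesePow k₂),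
    smul_mul_assoc]

lemma norm_integral_japanesePow_neg_left_le (h : FourierBound d p k₁ k₂ C) (f g : 𝓢(E d, ℂ)) :
    ‖∫ x, japanesePow (-k₁) x • (f x * g x)‖ ≤
      C * lpNorm (schwartzFT.symm f) p volume * lpNorm (schwartzBessel (-k₂) g) q volume := by
  have hpair : ∫ x, schwartzBessel k₂ (schwartzFT (schwartzBessel (-k₁) (schwartzFT.symm f))) x *
      schwartzBessel (-k₂) g x = ∫ x, japanesePow (-k₁) x • (f x * g x) := by
    set u := schwartzBessel (-k₁) (schwartzFT.symm f)
    calc ∫ x, schwartzBessel k₂ (schwartzFT u) x * schwartzBessel (-k₂) g x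
      _ = ∫ x, (japanesePow k₂ x • u x) * (japanesePow (-k₂) x • schwartzFT g x) := by
        rw [schwartzBessel_schwartzFT, integral_schwartzFT_mul]
        simp only [SchwartzMap.smulLeftCLM_apply_apply (hasTemperateGrowth_japanesePow k₂),
          schwartzFT_schwartzBessel_apply]
      _ = ∫ x, schwartzFT u x * g x := by
        rw [integral_schwartzFT_mul]
        refine integral_congr_ae (.of_forall fun x ↦ ?_)
        dsimp only
        rw [smul_mul_smul_comm, japanesePow_mul_apply, add_neg_cancel, japanesePow_zero,
          Pi.one_apply, one_smul]
      _ = ∫ x, japanesePow (-k₁) x • (f x * g x) := by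
        simp only [u, schwartzFT_schwartzBessel_apply, schwartzFT.apply_symm_apply, smul_mul_assoc]
  have hle := h.norm_integral_mul_le (q := q) (schwartzBessel (-k₁) (schwartzFT.symm f))
    (schwartzBessel (-k₂) g)
  rwa [hpair, schwartzBessel_schwartzBessel, add_neg_cancel, schwartzBessel_zero] at hle

end FourierBound

lemma lpNorm_schwartzDilation {c : ℝ} (hc : 0 < c) {p : ℝ≥0∞} (hp0 : p ≠ 0) (hp : p ≠ ⊤)
    (f : 𝓢(E d, ℂ)) :
    lpNorm (schwartzDilation c hc.ne' f) p volume =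
      c ^ (-(d / p.toReal)) * lpNorm f p volume := by
  rw [lpNorm_eq_integral_norm_rpow_toReal hp0 hp (SchwartzMap.continuous _).aestronglyMeasurable,
    lpNorm_eq_integral_norm_rpow_toReal hp0 hp f.continuous.aestronglyMeasurable]
  simp only [schwartzDilation_apply]
  rw [Measure.integral_comp_smul volume (fun x ↦ ‖f x‖ ^ p.toReal), finrank_euclideanSpace_fin,
    abs_of_pos (by positivity), smul_eq_mul,
    Real.mul_rpow (by positivity) (integral_nonneg fun x ↦ by positivity), ← Real.rpow_natCast,
    ← Real.rpow_neg hc.le, ← Real.rpow_mul hc.le, div_eq_mul_inv, neg_mul]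

lemma lpNorm_translate (c : E d) (p : ℝ≥0∞) (f : 𝓢(E d, ℂ)) :
    lpNorm (f.compSubConstCLM ℝ c) p volume = lpNorm f p volume := by
  rw [← toReal_eLpNorm (SchwartzMap.continuous _).aestronglyMeasurable,
    ← toReal_eLpNorm f.continuous.aestronglyMeasurable,
    ← eLpNorm_comp_measurePreserving f.continuous.aestronglyMeasurable
      (measurePreserving_sub_right volume c)]
  rfl

lemma lpNorm_schwartzFT_symm_translate (c : E d) (p : ℝ≥0∞) (f : 𝓢(E d, ℂ)) :
    lpNorm (schwartzFT.symm (f.compSubConstCLM ℝ c)) p volume =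
      lpNorm (schwartzFT.symm f) p volume := by
  rw [← toReal_eLpNorm (SchwartzMap.continuous _).aestronglyMeasurable,
    ← toReal_eLpNorm (SchwartzMap.continuous _).aestronglyMeasurable]
  congr 1
  refine eLpNorm_congr_norm_ae (.of_forall fun x ↦ ?_)
  rw [schwartzFT_symm_apply, schwartzFT_symm_apply, schwartzFT_translate, norm_smul, norm_smul,
    norm_mul, neg_mul, ← mul_neg, mul_comm Complex.I, ← Complex.ofReal_neg,
    Complex.norm_exp_ofReal_mul_I, one_mul]

lemma schwartzFT_symm_schwartzDilation {c : ℝ} (hc : c ≠ 0) (f : 𝓢(E d, ℂ)) :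
    schwartzFT.symm (schwartzDilation c hc f) =
      |c ^ d|⁻¹ • schwartzDilation c⁻¹ (inv_ne_zero hc) (schwartzFT.symm f) := by
  ext x
  rw [smul_apply, schwartzDilation_apply, schwartzFT_symm_apply, schwartzFT_symm_apply,
    schwartzFT_schwartzDilation, smul_neg, smul_comm]

lemma lpNorm_schwartzFT_symm_schwartzDilation {c : ℝ} (hc : 0 < c) {p : ℝ≥0∞} (hp0 : p ≠ 0)
    (hp : p ≠ ⊤) (f : 𝓢(E d, ℂ)) :
    lpNorm (schwartzFT.symm (schwartzDilation c hc.ne' f)) p volume =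
      c ^ (d / p.toReal - d) * lpNorm (schwartzFT.symm f) p volume := by
  rw [schwartzFT_symm_schwartzDilation, FunLike.coe_smul, lpNorm_const_smul, coe_nnnorm,
    lpNorm_schwartzDilation (inv_pos.mpr hc) hp0 hp, abs_of_pos (by positivity),
    Real.norm_of_nonneg (by positivity), Real.inv_rpow hc.le, Real.rpow_neg hc.le, inv_inv,
    Real.rpow_sub hc, Real.rpow_natCast]
  ring

lemma integral_smul_schwartzDilation_translate_mul_self (w : E d → ℝ) {c : ℝ} (hc : c ≠ 0)
    (y : E d) (f : 𝓢(E d, ℂ)) :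
    ∫ x, w x • (schwartzDilation c hc (f.compSubConstCLM ℝ y) x *
      schwartzDilation c hc (f.compSubConstCLM ℝ y) x) =
      |c ^ d|⁻¹ • ∫ x, w (c⁻¹ • (x + y)) • (f x * f x) := by
  have hscale := Measure.integral_comp_smul (volume : Measure (E d))
    (fun x ↦ w (c⁻¹ • x) • (f (x - y) * f (x - y))) c
  rw [← integral_add_right_eq_self (fun x ↦ w (c⁻¹ • x) • (f (x - y) * f (x - y))) y,
    finrank_euclideanSpace_fin, abs_inv] at hscale
  simpa only [inv_smul_smul₀ hc, add_sub_cancel_right, schwartzDilation_apply,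
    SchwartzMap.compSubConstCLM_apply] using hscale

lemma schwartzBessel_two_schwartzDilation {c : ℝ} (hc : c ≠ 0) (f : 𝓢(E d, ℂ)) :
    schwartzBessel 2 (schwartzDilation c hc f) = schwartzDilation c hc f +
      c ^ 2 • schwartzDilation c hc (schwartzMultiplier (fun ξ ↦ ‖ξ‖ ^ 2) f) := by
  have hsymbol : schwartzMultiplier (fun ξ ↦ japanesePow 2 (c • ξ)) f =
      f + c ^ 2 • schwartzMultiplier (fun ξ ↦ ‖ξ‖ ^ 2) f := by
    refine schwartzFT.injective (SchwartzMap.ext fun ξ ↦ ?_)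
    rw [schwartzFT_schwartzMultiplier_apply (by fun_prop), map_add, map_smul,
      add_apply, smul_apply, schwartzFT_schwartzMultiplier_apply (by fun_prop),
      smul_smul, japanesePow, div_self two_ne_zero, Real.rpow_one, norm_smul, mul_pow,
      Real.norm_eq_abs, sq_abs, add_smul, one_smul]
  rw [schwartzBessel, schwartzMultiplier_schwartzDilation (by fun_prop), hsymbol, map_add,
    map_smul]

lemma exists_lpNorm_schwartzBessel_two_mul_schwartzDilation_le {p : ℝ≥0∞} (hp1 : 1 ≤ p)
    (hp : p ≠ ⊤) (n : ℕ) (f : 𝓢(E d, ℂ)) :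
    ∃ M, ∀ ε (hε : 0 < ε), ε ≤ 1 →
      lpNorm (schwartzBessel (2 * n) (schwartzDilation ε hε.ne' f)) p volume ≤
        M * ε ^ (-(d / p.toReal)) := by
  induction n generalizing f with
  | zero =>
    refine ⟨lpNorm f p volume, fun ε hε _ ↦ ?_⟩
    rw [Nat.cast_zero, mul_zero, schwartzBessel_zero,
      lpNorm_schwartzDilation hε (one_pos.trans_le hp1).ne' hp, mul_comm]
  | succ n ih =>
    obtain ⟨M, hM⟩ := ih f
    obtain ⟨M', hM'⟩ := ih (schwartzMultiplier (fun ξ ↦ ‖ξ‖ ^ 2) f)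
    refine ⟨M + M', fun ε hε hε1 ↦ ?_⟩
    rw [Nat.cast_succ, mul_add, mul_one, ← schwartzBessel_schwartzBessel,
      schwartzBessel_two_schwartzDilation, map_add, map_smul]
    set u := schwartzBessel (2 * n) (schwartzDilation ε hε.ne' f)
    set v := schwartzBessel (2 * n) (schwartzDilation ε hε.ne' _)
    calc lpNorm (⇑(u + ε ^ 2 • v)) p volume
      _ ≤ lpNorm u p volume + ε ^ 2 * lpNorm v p volume := by
        rw [FunLike.coe_add, FunLike.coe_smul]
        refine (lpNorm_add_le (u.memLp p) hp1).trans_eq ?_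
        rw [lpNorm_const_smul, coe_nnnorm, Real.norm_of_nonneg (by positivity)]
      _ ≤ M * ε ^ (-(d / p.toReal)) + 1 * (M' * ε ^ (-(d / p.toReal))) := by
        gcongr
        · exact hM ε hε hε1
        · exact lpNorm_nonneg
        · exact pow_le_one₀ hε.le hε1
        · exact hM' ε hε hε1
      _ = (M + M') * ε ^ (-(d / p.toReal)) := by ring

lemma lpNorm_schwartzBessel_le {k : ℝ} (hk : k ≤ 0) {p : ℝ≥0∞} (hp1 : 1 ≤ p) (hp : p ≠ ⊤)
    (f : 𝓢(E d, ℂ)) : lpNorm (schwartzBessel k f) p volume ≤ lpNorm f p volume := by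
  rw [← toReal_eLpNorm (SchwartzMap.continuous _).aestronglyMeasurable,
    ← toReal_eLpNorm f.continuous.aestronglyMeasurable]
  exact ENNReal.toReal_mono (f.eLpNorm_lt_top p volume).ne (eLpNorm_schwartzBessel_le hk hp1 hp f)

lemma exists_lpNorm_schwartzBessel_schwartzDilation_le {p : ℝ≥0∞} (hp1 : 1 ≤ p) (hp : p ≠ ⊤)
    (k : ℝ) (f : 𝓢(E d, ℂ)) :
    ∃ M, ∀ ε (hε : 0 < ε), ε ≤ 1 →
      lpNorm (schwartzBessel k (schwartzDilation ε hε.ne' f)) p volume ≤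
        M * ε ^ (-(d / p.toReal)) := by
  obtain ⟨n, hn⟩ := exists_nat_ge (k / 2)
  obtain ⟨M, hM⟩ := exists_lpNorm_schwartzBessel_two_mul_schwartzDilation_le hp1 hp n f
  refine ⟨M, fun ε hε hε1 ↦ ?_⟩
  calc lpNorm (schwartzBessel k (schwartzDilation ε hε.ne' f)) p volume
    _ = lpNorm (schwartzBessel (k - 2 * n)
        (schwartzBessel (2 * n) (schwartzDilation ε hε.ne' f))) p volume := by
      rw [schwartzBessel_schwartzBessel, sub_add_cancel]
    _ ≤ lpNorm (schwartzBessel (2 * n) (schwartzDilation ε hε.ne' f)) p volume :=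
      lpNorm_schwartzBessel_le (by linarith) hp1 hp _
    _ ≤ M * ε ^ (-(d / p.toReal)) := hM ε hε hε1

lemma exists_schwartzMap_mul_le_norm_integral (d : ℕ) :
    ∃ φ : 𝓢(E d, ℂ), ∃ I > 0, ∀ (w : E d → ℝ) (m : ℝ), Continuous w →
      (∀ x, ‖x‖ < 1 → m ≤ w x) → m * I ≤ ‖∫ x, w x • (φ x * φ x)‖ := by
  let b : ContDiffBump (0 : E d) := ⟨1 / 2, 1, by norm_num, by norm_num⟩
  let φ : 𝓢(E d, ℂ) := HasCompactSupport.toSchwartzMap (f := fun x ↦ ((b x : ℝ) : ℂ))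
    (b.hasCompactSupport.comp_left Complex.ofReal_zero) (Complex.ofRealCLM.contDiff.comp b.contDiff)
  have hb : Continuous b := b.continuous
  have hint {w : E d → ℝ} (hw : Continuous w) : Integrable fun x ↦ w x * b x ^ 2 :=
    Continuous.integrable_of_hasCompactSupport (by fun_prop)
      (b.hasCompactSupport.mono fun x hx ↦ by simp_all)
  refine ⟨φ, ∫ x, b x ^ 2, ?_, fun w m hw hm ↦ ?_⟩
  · refine Continuous.integral_pos_of_hasCompactSupport_nonneg_nonzero (x := 0) (by fun_prop)
      (b.hasCompactSupport.comp_left (g := fun t : ℝ ↦ t ^ 2) (by simp)) (fun x ↦ sq_nonneg _)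
      (pow_pos (b.pos_of_mem_ball (Metric.mem_ball_self b.rOut_pos)) 2).ne'
  have hreal : ∫ x, w x • (φ x * φ x) = ((∫ x, w x * b x ^ 2 : ℝ) : ℂ) := by
    rw [← integral_complex_ofReal]
    refine integral_congr_ae (.of_forall fun x ↦ ?_)
    change w x • (((b x : ℝ) : ℂ) * ((b x : ℝ) : ℂ)) = _
    rw [Complex.real_smul]
    push_cast
    ring
  rw [hreal, Complex.norm_real, ← integral_const_mul]
  refine (integral_mono (hint continuous_const) (hint hw) fun x ↦ ?_).trans (le_abs_self _)
  rcases lt_or_ge ‖x‖ 1 with hx | hx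
  · exact mul_le_mul_of_nonneg_right (hm x hx) (sq_nonneg _)
  · have hzero : b x = 0 := b.zero_of_le_dist (by simpa using hx)
    simp [hzero]

lemma le_of_forall_mul_rpow_le {a b c M : ℝ} (hc : 0 < c)
    (h : ∀ ε, 0 < ε → ε ≤ 1 → c * ε ^ a ≤ M * ε ^ b) : b ≤ a := by
  by_contra! hab
  have hlim : Filter.Tendsto (fun ε : ℝ ↦ M * ε ^ (b - a)) (nhdsWithin 0 (Set.Ioi 0)) (nhds 0) := by
    have := (Real.continuousAt_rpow_const 0 (b - a) (.inr (by linarith))).tendsto.const_mul M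
    rw [Real.zero_rpow (by linarith), mul_zero] at this
    exact this.mono_left nhdsWithin_le_nhds
  refine hc.not_ge (ge_of_tendsto hlim ?_)
  filter_upwards [Ioc_mem_nhdsGT zero_lt_one] with ε ⟨hε, hε1⟩
  rw [Real.rpow_sub hε, ← mul_div_assoc, le_div_iff₀ (by positivity)]
  exact h ε hε hε1

lemma le_japanesePow_inv_smul (k : ℝ) {ε : ℝ} (hε : 0 < ε) (hε1 : ε ≤ 1) {y : E d}
    (hy : ‖y‖ ∈ Set.Icc 1 3) : 10 ^ (-|k / 2|) * ε ^ (-k) ≤ japanesePow k (ε⁻¹ • y) := by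
  obtain ⟨hy1, hy3⟩ := hy
  have hbase : 1 + ‖ε⁻¹ • y‖ ^ 2 = (ε ^ 2)⁻¹ * (ε ^ 2 + ‖y‖ ^ 2) := by
    rw [norm_smul, Real.norm_of_nonneg (by positivity)]
    field_simp
  have hpow : (10 : ℝ) ^ (-|k / 2|) ≤ (ε ^ 2 + ‖y‖ ^ 2) ^ (k / 2) :=
    calc (10 : ℝ) ^ (-|k / 2|)
      _ ≤ (ε ^ 2 + ‖y‖ ^ 2) ^ (-|k / 2|) :=
        Real.rpow_le_rpow_of_nonpos (by positivity) (by nlinarith) (by simp)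
      _ ≤ (ε ^ 2 + ‖y‖ ^ 2) ^ (k / 2) :=
        Real.rpow_le_rpow_of_exponent_le (by nlinarith) (neg_abs_le _)
  have hscale : ((ε ^ 2)⁻¹) ^ (k / 2) = ε ^ (-k) := by
    rw [Real.inv_rpow (by positivity), ← Real.rpow_natCast, ← Real.rpow_mul hε.le,
      Real.rpow_neg hε.le, Nat.cast_ofNat, mul_div_cancel₀ _ two_ne_zero]
  rw [japanesePow, hbase, Real.mul_rpow (by positivity) (by positivity), hscale, mul_comm]
  gcongr

lemma norm_add_mem_Icc {F : Type*} [SeminormedAddCommGroup F] {c x : F} (hc : ‖c‖ = 2)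
    (hx : ‖x‖ ≤ 1) : ‖x + c‖ ∈ Set.Icc 1 3 := by
  have hsub := norm_sub_le_norm_add c x
  rw [add_comm c x] at hsub
  exact ⟨by linarith, (norm_add_le x c).trans (by linarith)⟩

lemma exists_mul_rpow_le_norm_integral_translate (hd : 1 ≤ d) (k : ℝ) :
    ∃ (φ : 𝓢(E d, ℂ)) (c : E d), ∃ I > 0, ∀ ε, 0 < ε → ε ≤ 1 →
      I * ε ^ (-k) ≤ ‖∫ x, japanesePow k x •
        (φ.compSubConstCLM ℝ (ε⁻¹ • c) x * φ.compSubConstCLM ℝ (ε⁻¹ • c) x)‖ := by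
  have : Nonempty (Fin d) := ⟨⟨0, hd⟩⟩
  obtain ⟨c, hc⟩ := exists_norm_eq (E d) zero_le_two
  obtain ⟨φ, I, hI, hφ⟩ := exists_schwartzMap_mul_le_norm_integral d
  refine ⟨φ, c, 10 ^ (-|k / 2|) * I, by positivity, fun ε hε hε1 ↦ ?_⟩
  have hweight (x : E d) (hx : ‖x‖ < 1) :
      10 ^ (-|k / 2|) * ε ^ (-k) ≤ japanesePow k (x + ε⁻¹ • c) := by
    have hεx : ‖ε • x‖ ≤ 1 := by
      rw [norm_smul, Real.norm_of_nonneg hε.le]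
      exact mul_le_one₀ hε1 (norm_nonneg x) hx.le
    simpa [smul_add, hε.ne'] using le_japanesePow_inv_smul k hε hε1 (norm_add_mem_Icc hc hεx)
  rw [← integral_add_right_eq_self _ (ε⁻¹ • c), mul_right_comm]
  simp only [SchwartzMap.compSubConstCLM_apply, add_sub_cancel_right]
  exact hφ _ _ ((hasTemperateGrowth_japanesePow k).1.continuous.comp (by fun_prop)) hweight

lemma exists_mul_rpow_le_norm_integral_schwartzDilation (hd : 1 ≤ d) (k : ℝ) :
    ∃ ψ : 𝓢(E d, ℂ), ∃ I > 0, ∀ ε (hε : 0 < ε), ε ≤ 1 →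
      I * ε ^ (-k - d) ≤ ‖∫ x, japanesePow k x •
        (schwartzDilation ε hε.ne' ψ x * schwartzDilation ε hε.ne' ψ x)‖ := by
  have : Nonempty (Fin d) := ⟨⟨0, hd⟩⟩
  obtain ⟨c, hc⟩ := exists_norm_eq (E d) zero_le_two
  obtain ⟨φ, I, hI, hφ⟩ := exists_schwartzMap_mul_le_norm_integral d
  refine ⟨φ.compSubConstCLM ℝ c, 10 ^ (-|k / 2|) * I, by positivity, fun ε hε hε1 ↦ ?_⟩
  have hweight (x : E d) (hx : ‖x‖ < 1) :
      10 ^ (-|k / 2|) * ε ^ (-k) ≤ japanesePow k (ε⁻¹ • (x + c)) :=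
    le_japanesePow_inv_smul k hε hε1 (norm_add_mem_Icc hc hx.le)
  have hlower := hφ _ _
    ((hasTemperateGrowth_japanesePow k).1.continuous.comp (by fun_prop)) hweight
  have hεd : 0 < ε ^ d := pow_pos hε d
  rw [integral_smul_schwartzDilation_translate_mul_self, norm_smul, norm_inv, norm_abs_eq_norm,
    Real.norm_of_nonneg hεd.le, Real.rpow_sub hε, Real.rpow_natCast, ← mul_div_assoc,
    div_eq_inv_mul, mul_right_comm]
  exact mul_le_mul_of_nonneg_left hlower (inv_nonneg.mpr hεd.le)

namespace FourierBound

variable {p q : ℝ≥0∞} [p.HolderConjugate q] {k₁ k₂ C : ℝ}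

lemma right_nonpos (q : ℝ≥0∞) [p.HolderConjugate q] (hd : 1 ≤ d)
    (h : FourierBound d p k₁ k₂ C) : k₂ ≤ 0 := by
  obtain ⟨φ, c, I, hI, hφ⟩ := exists_mul_rpow_le_norm_integral_translate hd k₂
  refine neg_nonneg.mp <| le_of_forall_mul_rpow_le (M := C *
    lpNorm (schwartzBessel k₁ φ) p volume * lpNorm (schwartzFT.symm φ) q volume) hI
    fun ε hε hε1 ↦ ?_
  refine (hφ ε hε hε1).trans ((h.norm_integral_japanesePow_right_le (q := q) _ _).trans_eq ?_)
  rw [schwartzBessel, schwartzMultiplier_translate (by fun_prop), lpNorm_translate,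
    lpNorm_schwartzFT_symm_translate, Real.rpow_zero, mul_one]

variable (q) in
lemma div_sub_div_le_left (hd : 1 ≤ d) (hp : p ≠ ⊤) (hq : q ≠ ⊤) (hC : 0 ≤ C)
    (h : FourierBound d p k₁ k₂ C) : d / p.toReal - d / q.toReal ≤ k₁ := by
  obtain ⟨ψ, I, hI, hψ⟩ := exists_mul_rpow_le_norm_integral_schwartzDilation hd (-k₁)
  obtain ⟨M, hM⟩ := exists_lpNorm_schwartzBessel_schwartzDilation_le
    (ENNReal.HolderConjugate.one_le q p) hq (-k₂) ψ
  have hexponent : d / p.toReal - d - d / q.toReal ≤ - -k₁ - d := by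
    refine le_of_forall_mul_rpow_le (M := C * lpNorm (schwartzFT.symm ψ) p volume * M) hI
      fun ε hε hε1 ↦ ?_
    calc I * ε ^ (- -k₁ - d)
      _ ≤ C * lpNorm (schwartzFT.symm (schwartzDilation ε hε.ne' ψ)) p volume *
          lpNorm (schwartzBessel (-k₂) (schwartzDilation ε hε.ne' ψ)) q volume :=
        (hψ ε hε hε1).trans (h.norm_integral_japanesePow_neg_left_le _ _)
      _ ≤ C * (ε ^ (d / p.toReal - d) * lpNorm (schwartzFT.symm ψ) p volume) *
          (M * ε ^ (-(d / q.toReal))) := by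
        rw [lpNorm_schwartzFT_symm_schwartzDilation hε (ENNReal.HolderConjugate.ne_zero p q) hp]
        exact mul_le_mul_of_nonneg_left (hM ε hε hε1)
          (mul_nonneg hC (mul_nonneg (by positivity) lpNorm_nonneg))
      _ = C * lpNorm (schwartzFT.symm ψ) p volume * M *
          ε ^ (d / p.toReal - d - d / q.toReal) := by
        rw [sub_eq_add_neg (d / p.toReal - d : ℝ), Real.rpow_add hε]
        ring
  linarith

end FourierBound

end Necessity

lemma fourierBound_ofReal_iff {d : ℕ} {p : ℝ} (hp : 0 < p) {k₁ k₂ C : ℝ} :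
    FourierBound d (ENNReal.ofReal p) k₁ k₂ C ↔ ∀ f : 𝓢(E d, ℂ),
      (∫ x, ‖bessel d k₂ (FT d f) x‖ ^ p) ^ (1 / p) ≤
        C * (∫ x, ‖bessel d k₁ f x‖ ^ p) ^ (1 / p) := by
  have hnorm (f : 𝓢(E d, ℂ)) :
      lpNorm f (ENNReal.ofReal p) volume = (∫ x, ‖f x‖ ^ p) ^ (1 / p) := by
    rw [lpNorm_eq_integral_norm_rpow_toReal (ENNReal.ofReal_pos.mpr hp).ne' ENNReal.ofReal_ne_top
      f.continuous.aestronglyMeasurable, ENNReal.toReal_ofReal hp.le, one_div]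
  have hFT (f : 𝓢(E d, ℂ)) : FT d f = schwartzFT f := funext fun ξ ↦ (schwartzFT_apply f ξ).symm
  simp only [FourierBound, hnorm, schwartzBessel_apply, hFT]

/-- for `1 < p ≤ 2`, the Fourier transform is bounded from the Bessel
potential space `L^p_{k₁}(ℝ^d)` to `L^p_{k₂}(ℝ^d)` if and only if
`k₁ ≥ 2d(1/p - 1/2)` and `k₂ ≤ 0`. -/
theorem stmt15 (d : ℕ) (hd : 1 ≤ d) (p : ℝ) (hp1 : 1 < p) (hp2 : p ≤ 2) (k₁ k₂ : ℝ) :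
    (∃ C > (0 : ℝ), ∀ f : SchwartzMap (E d) ℂ,
        (∫ x : E d, ‖bessel d k₂ (FT d (⇑f)) x‖ ^ p) ^ (1 / p) ≤
          C * (∫ x : E d, ‖bessel d k₁ (⇑f) x‖ ^ p) ^ (1 / p)) ↔
      (2 * d * (1 / p - 1 / 2) ≤ k₁ ∧ k₂ ≤ 0) := by
  have hp0 : 0 < p := one_pos.trans hp1
  simp only [← fourierBound_ofReal_iff hp0]
  constructor
  · rintro ⟨C, hC, h⟩
    have hpq := Real.HolderConjugate.conjExponent hp1
    have := hpq.ennrealOfReal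
    have hk₁ := h.div_sub_div_le_left (ENNReal.ofReal p.conjExponent) hd ENNReal.ofReal_ne_top
      ENNReal.ofReal_ne_top hC.le
    rw [ENNReal.toReal_ofReal hp0.le, ENNReal.toReal_ofReal hpq.symm.nonneg, div_eq_mul_inv,
      div_eq_mul_inv, ← hpq.one_sub_inv] at hk₁
    refine ⟨?_, h.right_nonpos (ENNReal.ofReal p.conjExponent) hd⟩
    linarith [show 2 * d * (1 / p - 1 / 2) = d * p⁻¹ - d * (1 - p⁻¹) by ring]
  · rintro ⟨hk₁, hk₂⟩
    exact exists_fourierBound hd hp1 hp2 hk₁ hk₂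
end
end
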